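/- (Proposition 4: unconditional Lipschitz stability with full lateral boundary data.) Under the assumptions of the context, there exists a constant C > 0, depending on n, T, M, δ₀, D, R, p₁ and H but not on y and f, such that (∫_D |f(x)|² dx)^{1/2} + sup_{0 ≤ t ≤ T} ( (∫_D |y(x,t)|² dx)^{1/2} + (∫_D |∂_t y(x,t)|² dx)^{1/2} ) ≤ C ( Σ_{i=1,2} ∫₀^T ∫_{B_{ρ₁}} |∂_t y(G_i(x'), t)|² ω_i(x') dx' dt )^{1/2}. -/

import Mathlib

noncomputable section

open MeasureTheory Metric Set
open scoped RealInnerProductSpace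

abbrev Esp (n : ℕ) : Type := EuclideanSpace ℝ (Fin n)

/-- The point `(x', xₙ) ∈ ℝ^{d+1} = ℝ^d × ℝ`. -/
noncomputable def graphMk (d : ℕ) (x' : Esp d) (xn : ℝ) : Esp (d+1) :=
  (EuclideanSpace.equiv (Fin (d+1)) ℝ).symm
    (Fin.snoc (⇑(EuclideanSpace.equiv (Fin d) ℝ) x') xn)

/-- `H` is `(M, δ₀)`-admissible on the compact set `K`. -/
def IsAdmissible {n : ℕ} (M δ₀ : ℝ) (K : Set (Esp n)) (H : Esp n → Esp n) : Prop :=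
  ∃ U : Set (Esp n), IsOpen U ∧ Convex ℝ U ∧ K ⊆ U ∧ ContDiffOn ℝ 1 H U ∧
    (∀ x ∈ U, ‖H x‖ ≤ M) ∧ (∀ x ∈ U, ‖fderiv ℝ H x‖ ≤ M) ∧ (∀ x ∈ K, δ₀ < ‖H x‖)

/-- `ψ_H(x) = ⟨x, H(x)⟩`. -/
noncomputable def psiW {n : ℕ} (H : Esp n → Esp n) (x : Esp n) : ℝ := ⟪x, H x⟫

/-- The Carleman weight `φ_H(x,t) = -βt + ψ_H(x)`. -/
noncomputable def phiW {n : ℕ} (β : ℝ) (H : Esp n → Esp n) (x : Esp n) (t : ℝ) : ℝ :=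
  -(β * t) + psiW H x

/-- Outward unit normal `ν₁` of the upper graph `xₙ = ℓ(x')`. -/
noncomputable def nuUp (d : ℕ) (ℓ : Esp d → ℝ) (x' : Esp d) : Esp (d+1) :=
  (Real.sqrt (1 + ‖gradient ℓ x'‖ ^ 2))⁻¹ • graphMk d (-(gradient ℓ x')) 1

/-- Outward unit normal `ν₂` of the lower graph `xₙ = m(x')`. -/
noncomputable def nuDown (d : ℕ) (m : Esp d → ℝ) (x' : Esp d) : Esp (d+1) :=
  (Real.sqrt (1 + ‖gradient m x'‖ ^ 2))⁻¹ • graphMk d (gradient m x') (-1)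

/-- Area element `ω(x') = √(1 + |∇m(x')|²)` of the graph of `m`. -/
noncomputable def omegaW (d : ℕ) (m : Esp d → ℝ) (x' : Esp d) : ℝ :=
  Real.sqrt (1 + ‖gradient m x'‖ ^ 2)

/-- The graph domain `D = {(x', xₙ) : |x'| < ρ₁, ℓ(x') − ℓ̃(x') < xₙ < ℓ(x')}`. -/
def graphDomain (d : ℕ) (ρ₁ : ℝ) (ℓ ℓt : Esp d → ℝ) : Set (Esp (d+1)) :=
  {x | ∃ x' : Esp d, ∃ xn : ℝ, ‖x'‖ < ρ₁ ∧ ℓ x' - ℓt x' < xn ∧ xn < ℓ x' ∧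
    x = graphMk d x' xn}

open Filter Function Topology

/-!
The time derivative `z = ∂ₜ y` solves a transport equation with source `∂ₜ R · f` and initial value
`z(·, 0) = R(·, 0) f`, so that `f` is controlled by `z(·, 0)`. Multiply the equation by
`2 z e^{-λ t + φ}`, where `φ` is constant or a large multiple `τ ψ` of `ψ(x) = ⟨x - a, H x⟩`, and
integrate over `D`; the flux of the weighted energy through `∂D` is bounded by the boundary data.

* Forward in time with `φ = 0`, the energy of `z` is bounded by `∫ f²` plus the boundary data.
* Backward in time with `φ = τ ψ` and `λ = τ β`, the growth `⟨H, ∇ψ⟩ ≥ 2 β` of the weight along `H`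
  absorbs the lower order terms, and `∫ f²` is bounded by the boundary data plus
  `e^{-τ (β T - 2 sup |ψ|)}` times the energy of `z` at time `T`.

Smallness of the diameter makes `β T > 2 sup |ψ|`, so that inserting the first estimate into the
second and taking `τ` large bounds `∫ f²` by the boundary data alone.

The flux bound comes from the divergence theorem for compactly supported fields, applied to cutoffs
whose gradients concentrate on the two graphs.
-/

/-! ### Coordinates on `ℝ^{d+1} = ℝ^d × ℝ` -/

section Coordinates

variable (d : ℕ)

/-- The horizontal part `x'` of `x = (x', xₙ)`. -/
def horiz : Esp (d + 1) →L[ℝ] Esp d :=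
  LinearMap.toContinuousLinearMap
    { toFun := fun x => WithLp.toLp 2 fun i => x i.castSucc
      map_add' := fun x y => by ext i; simp
      map_smul' := fun c x => by ext i; simp }

/-- The vertical coordinate `xₙ` of `x = (x', xₙ)`. -/
def vert : Esp (d + 1) →L[ℝ] ℝ := EuclideanSpace.proj (Fin.last d)

@[simp] lemma horiz_apply (x : Esp (d + 1)) (i : Fin d) : horiz d x i = x i.castSucc := rfl

@[simp] lemma vert_apply (x : Esp (d + 1)) : vert d x = x (Fin.last d) := rfl

@[simp] lemma graphMk_last (x' : Esp d) (r : ℝ) : graphMk d x' r (Fin.last d) = r := by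
  simp [graphMk]

@[simp] lemma graphMk_castSucc (x' : Esp d) (r : ℝ) (i : Fin d) :
    graphMk d x' r i.castSucc = x' i := by
  simp [graphMk]

@[simp] lemma horiz_graphMk (x' : Esp d) (r : ℝ) : horiz d (graphMk d x' r) = x' := by
  ext i; simp

lemma vert_graphMk (x' : Esp d) (r : ℝ) : vert d (graphMk d x' r) = r := by simp

lemma graphMk_horiz_vert (x : Esp (d + 1)) : graphMk d (horiz d x) (vert d x) = x := by
  ext i
  refine Fin.lastCases ?_ (fun i => ?_) i <;> simp

lemma norm_sq_eq_horiz_add_vert (x : Esp (d + 1)) :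
    ‖x‖ ^ 2 = ‖horiz d x‖ ^ 2 + vert d x ^ 2 := by
  simp [EuclideanSpace.norm_sq_eq, Fin.sum_univ_castSucc]

lemma continuous_graphMk : Continuous fun p : Esp d × ℝ => graphMk d p.1 p.2 := by
  refine (EuclideanSpace.equiv (Fin (d + 1)) ℝ).symm.continuous.comp (continuous_pi fun i => ?_)
  refine Fin.lastCases ?_ (fun i => ?_) i
  · simpa using continuous_snd
  · simp only [Fin.snoc_castSucc]
    exact (EuclideanSpace.proj (𝕜 := ℝ) i).continuous.comp continuous_fst

lemma measurePreserving_horiz_vert :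
    MeasurePreserving (fun x : Esp (d + 1) => (horiz d x, vert d x)) := by
  have split := volume_preserving_piFinSuccAbove (fun _ : Fin (d + 1) => ℝ) (Fin.last d)
  have swap : MeasurePreserving (Prod.swap : ℝ × (Fin d → ℝ) → (Fin d → ℝ) × ℝ) :=
    Measure.measurePreserving_swap
  have euclidean :=
    (PiLp.volume_preserving_toLp (Fin d)).prod (MeasurePreserving.id (volume : Measure ℝ))
  convert euclidean.comp (swap.comp (split.comp (PiLp.volume_preserving_ofLp (Fin (d + 1)))))
    using 1
  · ext x : 1
    refine Prod.ext ?_ ?_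
    · ext i
      simp [MeasurableEquiv.piFinSuccAbove, Fin.init]
    · simp [MeasurableEquiv.piFinSuccAbove]
  · rfl

lemma measurableEmbedding_horiz_vert :
    MeasurableEmbedding fun x : Esp (d + 1) => (horiz d x, vert d x) := by
  refine ((horiz d).continuous.prodMk (vert d).continuous).measurableEmbedding fun x y hxy => ?_
  obtain ⟨hhoriz, hvert⟩ := Prod.mk.inj hxy
  rw [← graphMk_horiz_vert d x, ← graphMk_horiz_vert d y, hhoriz, hvert]

end Coordinates

/-! ### The graph domain -/

section GraphDomain

variable {d : ℕ} {ρ : ℝ} {ℓ ℓt : Esp d → ℝ}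

lemma mem_graphDomain_iff {x : Esp (d + 1)} :
    x ∈ graphDomain d ρ ℓ ℓt ↔ horiz d x ∈ ball 0 ρ ∧
      ℓ (horiz d x) - ℓt (horiz d x) < vert d x ∧ vert d x < ℓ (horiz d x) := by
  rw [mem_ball_zero_iff]
  constructor
  · rintro ⟨x', r, hx', hlow, hup, rfl⟩
    rw [horiz_graphMk, vert_graphMk]
    exact ⟨hx', hlow, hup⟩
  · rintro ⟨hx', hlow, hup⟩
    exact ⟨_, _, hx', hlow, hup, (graphMk_horiz_vert d x).symm⟩

lemma graphMk_mem_closure_graphDomain {x' : Esp d} (hx' : x' ∈ ball 0 ρ) (hpos : 0 < ℓt x')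
    {r : ℝ} (hr : r ∈ Icc (ℓ x' - ℓt x') (ℓ x')) :
    graphMk d x' r ∈ closure (graphDomain d ρ ℓ ℓt) := by
  rw [← closure_Ioo (by linarith : ℓ x' - ℓt x' < ℓ x').ne] at hr
  have hc : Continuous fun r => graphMk d x' r :=
    (continuous_graphMk d).comp (Continuous.prodMk_right x')
  refine closure_mono ?_ (image_closure_subset_closure_image hc ⟨r, hr, rfl⟩)
  rintro _ ⟨s, hs, rfl⟩
  exact ⟨x', s, mem_ball_zero_iff.1 hx', hs.1, hs.2, rfl⟩

variable (d ρ ℓ ℓt) in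
/-- The regularity and positivity assumptions on the function `ℓ` bounding a graph domain from
above and on its thickness `ℓt`. -/
structure IsGraphPair : Prop where
  radius_pos : 0 < ρ
  contDiffOn_upper : ContDiffOn ℝ 1 ℓ (closedBall 0 ρ)
  contDiffOn_thickness : ContDiffOn ℝ 1 ℓt (closedBall 0 ρ)
  thickness_pos : ∀ x' : Esp d, ‖x'‖ < ρ → 0 < ℓt x'
  thickness_eq_zero : ∀ x' : Esp d, ‖x'‖ = ρ → ℓt x' = 0

namespace IsGraphPair

variable (hG : IsGraphPair d ρ ℓ ℓt)
include hG

lemma contDiffOn_lower : ContDiffOn ℝ 1 (fun z => ℓ z - ℓt z) (closedBall 0 ρ) :=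
  hG.contDiffOn_upper.sub hG.contDiffOn_thickness

lemma upper_mem_closure {x' : Esp d} (hx' : x' ∈ ball 0 ρ) :
    graphMk d x' (ℓ x') ∈ closure (graphDomain d ρ ℓ ℓt) := by
  have hpos := hG.thickness_pos x' (mem_ball_zero_iff.1 hx')
  exact graphMk_mem_closure_graphDomain hx' hpos ⟨by linarith, le_rfl⟩

lemma lower_mem_closure {x' : Esp d} (hx' : x' ∈ ball 0 ρ) :
    graphMk d x' (ℓ x' - ℓt x') ∈ closure (graphDomain d ρ ℓ ℓt) := by
  have hpos := hG.thickness_pos x' (mem_ball_zero_iff.1 hx')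
  exact graphMk_mem_closure_graphDomain hx' hpos ⟨le_rfl, by linarith⟩

lemma nonempty_graphDomain : (graphDomain d ρ ℓ ℓt).Nonempty :=
  closure_nonempty_iff.1 ⟨_, hG.upper_mem_closure (mem_ball_self hG.radius_pos)⟩

lemma isOpen_graphDomain : IsOpen (graphDomain d ρ ℓ ℓt) := by
  have hmaps : MapsTo (horiz d) (horiz d ⁻¹' ball 0 ρ) (closedBall 0 ρ) :=
    fun x hx => ball_subset_closedBall hx
  have hup := hG.contDiffOn_upper.continuousOn.comp (horiz d).continuous.continuousOn hmaps
  have hlow := hG.contDiffOn_lower.continuousOn.comp (horiz d).continuous.continuousOn hmaps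
  have hvert := (vert d).continuous.continuousOn (s := horiz d ⁻¹' ball 0 ρ)
  have hball : IsOpen (horiz d ⁻¹' ball 0 ρ) := isOpen_ball.preimage (horiz d).continuous
  convert ((hvert.sub hlow).isOpen_inter_preimage hball (isOpen_Ioi (a := 0))).inter
    ((hup.sub hvert).isOpen_inter_preimage hball (isOpen_Ioi (a := 0))) using 1
  ext x
  simp only [mem_graphDomain_iff, mem_inter_iff, mem_preimage, mem_Ioi, Pi.sub_apply,
    Function.comp_apply, sub_pos]
  tauto

lemma isBounded_graphDomain : Bornology.IsBounded (graphDomain d ρ ℓ ℓt) := by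
  obtain ⟨a, ha⟩ := (isCompact_closedBall _ _).exists_bound_of_continuousOn
    hG.contDiffOn_upper.continuousOn
  obtain ⟨b, hb⟩ := (isCompact_closedBall _ _).exists_bound_of_continuousOn
    hG.contDiffOn_lower.continuousOn
  have hK : IsCompact ((fun p : Esp d × ℝ => graphMk d p.1 p.2) ''
      (closedBall 0 ρ ×ˢ Icc (-b) a)) :=
    ((isCompact_closedBall _ _).prod isCompact_Icc).image (continuous_graphMk d)
  refine hK.isBounded.subset fun x hx => ?_
  obtain ⟨hx', hlow, hup⟩ := mem_graphDomain_iff.1 hx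
  have hx' := ball_subset_closedBall hx'
  exact ⟨(horiz d x, vert d x), ⟨hx', (abs_le.1 (hb _ hx')).1.trans hlow.le,
    hup.le.trans (abs_le.1 (ha _ hx')).2⟩, graphMk_horiz_vert d x⟩

lemma isCompact_closure : IsCompact (closure (graphDomain d ρ ℓ ℓt)) :=
  hG.isBounded_graphDomain.isCompact_closure

end IsGraphPair

end GraphDomain

/-! ### Strips along a graph and the surface measure -/

section GraphStrip

variable {d : ℕ} {ρ a b : ℝ} {c : Esp d → ℝ}

variable (d c) in
/-- The signed height of a point above the graph of `c`. -/
def graphHeight (x : Esp (d + 1)) : ℝ := vert d x - c (horiz d x)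

variable (d c) in
/-- The vertical projection of a point to the graph of `c`. -/
def graphProj (x : Esp (d + 1)) : Esp (d + 1) := graphMk d (horiz d x) (c (horiz d x))

lemma dist_graphProj (x : Esp (d + 1)) : dist x (graphProj d c x) = |graphHeight d c x| := by
  have h := norm_sq_eq_horiz_add_vert d (x - graphProj d c x)
  rw [graphProj, map_sub, map_sub, horiz_graphMk, vert_graphMk, sub_self, norm_zero] at h
  rw [dist_eq_norm, ← abs_norm, ← sq_eq_sq_iff_abs_eq_abs, graphProj, graphHeight, h]
  ring

variable (d ρ a b c) in
/-- The strip over the ball of radius `ρ` in which the signed height above the graph of `c` lies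
strictly between `a` and `b`. -/
def graphStrip : Set (Esp (d + 1)) := {x | horiz d x ∈ ball 0 ρ ∧ graphHeight d c x ∈ Ioo a b}

lemma isOpen_graphStrip (hc : ContinuousOn c (ball 0 ρ)) : IsOpen (graphStrip d ρ a b c) :=
  ((vert d).continuous.continuousOn.sub (hc.comp (horiz d).continuous.continuousOn
    (mapsTo_preimage _ _))).isOpen_inter_preimage
      (isOpen_ball.preimage (horiz d).continuous) isOpen_Ioo

lemma map_horiz_volume_restrict_graphStrip (hc : ContinuousOn c (ball 0 ρ)) :
    (volume.restrict (graphStrip d ρ a b c)).map (horiz d)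
      = ENNReal.ofReal (b - a) • volume.restrict (ball 0 ρ) := by
  ext B hB
  have hcB : AEMeasurable c (volume.restrict (B ∩ ball 0 ρ)) :=
    (hc.mono inter_subset_right).aemeasurable (hB.inter measurableSet_ball)
  have hpre : horiz d ⁻¹' B ∩ graphStrip d ρ a b c = (fun x => (horiz d x, vert d x)) ⁻¹'
      regionBetween (fun x' => c x' + a) (fun x' => c x' + b) (B ∩ ball 0 ρ) := by
    ext x
    simp only [graphStrip, graphHeight, regionBetween, mem_inter_iff, mem_preimage, mem_ofPred_eq,
      mem_Ioo, and_assoc, lt_sub_iff_add_lt', sub_lt_iff_lt_add']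
  rw [Measure.map_apply (horiz d).measurable hB,
    Measure.restrict_apply ((horiz d).measurable hB),
    hpre,
    (measurePreserving_horiz_vert d).measure_preimage_emb (measurableEmbedding_horiz_vert d),
    Measure.volume_eq_prod,
    volume_regionBetween_eq_lintegral (hcB.add_const a) (hcB.add_const b)
      (hB.inter measurableSet_ball)]
  simp [Measure.restrict_apply hB]

lemma integrableOn_graphStrip_comp_horiz {φ : Esp d → ℝ} (hc : ContinuousOn c (ball 0 ρ))
    (hφ : IntegrableOn φ (ball 0 ρ)) :
    IntegrableOn (fun x => φ (horiz d x)) (graphStrip d ρ a b c) := by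
  have hint := hφ.integrable.smul_measure (c := ENNReal.ofReal (b - a)) ENNReal.ofReal_ne_top
  rw [← map_horiz_volume_restrict_graphStrip hc] at hint
  exact hint.comp_measurable (horiz d).measurable

lemma setIntegral_graphStrip_comp_horiz {φ : Esp d → ℝ} (hab : a ≤ b)
    (hc : ContinuousOn c (ball 0 ρ)) (hφ : IntegrableOn φ (ball 0 ρ)) :
    ∫ x in graphStrip d ρ a b c, φ (horiz d x) = (b - a) * ∫ x' in ball 0 ρ, φ x' := by
  have hint := hφ.integrable.smul_measure (c := ENNReal.ofReal (b - a)) ENNReal.ofReal_ne_top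
  rw [← map_horiz_volume_restrict_graphStrip hc] at hint
  rw [← integral_map (horiz d).measurable.aemeasurable hint.aestronglyMeasurable,
    map_horiz_volume_restrict_graphStrip hc, integral_smul_measure,
    ENNReal.toReal_ofReal (sub_nonneg.2 hab), smul_eq_mul]

end GraphStrip

section GraphMeasure

variable {d : ℕ} {ρ : ℝ} {c : Esp d → ℝ}

lemma omegaW_nonneg {x' : Esp d} : 0 ≤ omegaW d c x' := Real.sqrt_nonneg _

lemma measurable_omegaW : Measurable (omegaW d c) :=
  (((LinearIsometryEquiv.continuous _).measurable.comp (measurable_fderiv ℝ c)).norm.pow_const 2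
    |>.const_add 1).sqrt

lemma exists_omegaW_le (hρ : 0 < ρ) (hc : ContDiffOn ℝ 1 c (closedBall 0 ρ)) :
    ∃ B, ∀ x' ∈ ball 0 ρ, omegaW d c x' ≤ B := by
  have huniq : UniqueDiffOn ℝ (closedBall (0 : Esp d) ρ) :=
    uniqueDiffOn_convex (convex_closedBall 0 ρ)
      ⟨0, ball_subset_interior_closedBall (mem_ball_self hρ)⟩
  obtain ⟨B, hB⟩ := (isCompact_closedBall (0 : Esp d) ρ).exists_bound_of_continuousOn
    (hc.continuousOn_fderivWithin huniq le_rfl)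
  refine ⟨√(1 + B ^ 2), fun x' hx' => ?_⟩
  have hgrad : ‖gradient c x'‖ = ‖fderivWithin ℝ c (closedBall 0 ρ) x'‖ := by
    rw [gradient, LinearIsometryEquiv.norm_map, fderivWithin_of_mem_nhds
      (mem_of_superset (isOpen_ball.mem_nhds hx') ball_subset_closedBall)]
  rw [omegaW, hgrad]
  gcongr
  exact hB x' (ball_subset_closedBall hx')

variable (d ρ c) in
/-- The surface measure of the graph of `c` over the ball of radius `ρ`. -/
def graphMeasure : Measure (Esp (d + 1)) :=
  ((volume.restrict (ball 0 ρ)).withDensity fun x' => ENNReal.ofReal (omegaW d c x')).map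
    fun x' => graphMk d x' (c x')

lemma isFiniteMeasure_graphMeasure (hρ : 0 < ρ) (hc : ContDiffOn ℝ 1 c (closedBall 0 ρ)) :
    IsFiniteMeasure (graphMeasure d ρ c) := by
  obtain ⟨B, hB⟩ := exists_omegaW_le hρ hc
  have hlt : ∫⁻ x' in ball 0 ρ, ENNReal.ofReal (omegaW d c x') < ⊤ := by
    refine setLIntegral_lt_top_of_le_nnreal measure_ball_lt_top.ne ⟨B.toNNReal, fun x' hx' => ?_⟩
    exact ENNReal.ofReal_le_ofReal (hB x' hx')
  have := isFiniteMeasure_withDensity hlt.ne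
  exact Measure.isFiniteMeasure_map _ _

variable {K : Set (Esp (d + 1))}

lemma aemeasurable_graphMk (hc : ContinuousOn c (ball 0 ρ)) :
    AEMeasurable (fun x' => graphMk d x' (c x'))
      ((volume.restrict (ball 0 ρ)).withDensity fun x' => ENNReal.ofReal (omegaW d c x')) :=
  (((continuous_graphMk d).comp_continuousOn (continuousOn_id.prodMk hc)).aemeasurable
    measurableSet_ball).mono_ac (withDensity_absolutelyContinuous _ _)

lemma ae_graphMeasure_mem (hc : ContinuousOn c (ball 0 ρ)) (hK : MeasurableSet K)
    (hcK : ∀ x' ∈ ball 0 ρ, graphMk d x' (c x') ∈ K) : ∀ᵐ x ∂graphMeasure d ρ c, x ∈ K := by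
  refine (ae_map_iff (aemeasurable_graphMk hc) hK).2
    ((withDensity_absolutelyContinuous _ _).ae_le ?_)
  filter_upwards [ae_restrict_mem measurableSet_ball] with x' hx' using hcK x' hx'

lemma integral_graphMeasure {g : Esp (d + 1) → ℝ} (hc : ContinuousOn c (ball 0 ρ))
    (hg : AEStronglyMeasurable g (graphMeasure d ρ c)) :
    ∫ x, g x ∂graphMeasure d ρ c
      = ∫ x' in ball 0 ρ, g (graphMk d x' (c x')) * omegaW d c x' := by
  rw [graphMeasure, integral_map (aemeasurable_graphMk hc) hg,
    integral_withDensity_eq_integral_toReal_smul measurable_omegaW.ennreal_ofReal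
      (ae_of_all _ fun _ => ENNReal.ofReal_lt_top)]
  simp only [ENNReal.toReal_ofReal omegaW_nonneg, smul_eq_mul, mul_comm]

lemma integrableOn_comp_graphMk_mul_omegaW {g : Esp (d + 1) → ℝ} (hc : ContinuousOn c (ball 0 ρ))
    (hg : Integrable g (graphMeasure d ρ c)) :
    IntegrableOn (fun x' => g (graphMk d x' (c x')) * omegaW d c x') (ball 0 ρ) := by
  have hint := hg.comp_aemeasurable (aemeasurable_graphMk hc)
  rw [integrable_withDensity_iff measurable_omegaW.ennreal_ofReal
    (ae_of_all _ fun _ => ENNReal.ofReal_lt_top)] at hint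
  simpa only [IntegrableOn, ENNReal.toReal_ofReal omegaW_nonneg, Function.comp_apply] using hint

variable {a b : ℝ}

lemma integrableOn_graphStrip_graphProj {h : Esp (d + 1) → ℝ} (hc : ContinuousOn c (ball 0 ρ))
    (hh : Integrable h (graphMeasure d ρ c)) :
    IntegrableOn (fun x => h (graphProj d c x) * omegaW d c (horiz d x))
      (graphStrip d ρ a b c) :=
  integrableOn_graphStrip_comp_horiz hc (integrableOn_comp_graphMk_mul_omegaW hc hh)

lemma setIntegral_graphStrip_graphProj {h : Esp (d + 1) → ℝ} (hab : a ≤ b)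
    (hc : ContinuousOn c (ball 0 ρ)) (hh : Integrable h (graphMeasure d ρ c)) :
    ∫ x in graphStrip d ρ a b c, h (graphProj d c x) * omegaW d c (horiz d x)
      = (b - a) * ∫ x, h x ∂graphMeasure d ρ c := by
  rw [integral_graphMeasure hc hh.aestronglyMeasurable]
  exact setIntegral_graphStrip_comp_horiz hab hc (integrableOn_comp_graphMk_mul_omegaW hc hh)

variable (d ρ) in
/-- The surface measure of the boundary of `graphDomain d ρ ℓ ℓt`, as the sum over the upper and
the lower graph. -/
def graphBoundaryMeasure (ℓ ℓt : Esp d → ℝ) : Measure (Esp (d + 1)) :=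
  graphMeasure d ρ ℓ + graphMeasure d ρ fun z => ℓ z - ℓt z

namespace IsGraphPair

variable {ℓ ℓt : Esp d → ℝ} (hG : IsGraphPair d ρ ℓ ℓt)
include hG

lemma isFiniteMeasure_graphBoundaryMeasure : IsFiniteMeasure (graphBoundaryMeasure d ρ ℓ ℓt) :=
  have := isFiniteMeasure_graphMeasure hG.radius_pos hG.contDiffOn_upper
  have := isFiniteMeasure_graphMeasure hG.radius_pos hG.contDiffOn_lower
  isFiniteMeasureAdd

lemma continuousOn_upper_ball : ContinuousOn ℓ (ball 0 ρ) :=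
  hG.contDiffOn_upper.continuousOn.mono ball_subset_closedBall

lemma continuousOn_lower_ball : ContinuousOn (fun z => ℓ z - ℓt z) (ball 0 ρ) :=
  hG.contDiffOn_lower.continuousOn.mono ball_subset_closedBall

lemma ae_graphBoundaryMeasure_mem_closure :
    ∀ᵐ x ∂graphBoundaryMeasure d ρ ℓ ℓt, x ∈ closure (graphDomain d ρ ℓ ℓt) :=
  ae_add_measure_iff.2
    ⟨ae_graphMeasure_mem hG.continuousOn_upper_ball isClosed_closure.measurableSet
      fun _ hx' => hG.upper_mem_closure hx',
    ae_graphMeasure_mem hG.continuousOn_lower_ball isClosed_closure.measurableSet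
      fun _ hx' => hG.lower_mem_closure hx'⟩

lemma integral_graphBoundaryMeasure {g : Esp (d + 1) → ℝ}
    (hg : Integrable g (graphBoundaryMeasure d ρ ℓ ℓt)) :
    ∫ x, g x ∂graphBoundaryMeasure d ρ ℓ ℓt
      = ∫ x' in ball 0 ρ, (g (graphMk d x' (ℓ x')) * omegaW d ℓ x'
        + g (graphMk d x' (ℓ x' - ℓt x')) * omegaW d (fun z => ℓ z - ℓt z) x') := by
  obtain ⟨hup, hlow⟩ := integrable_add_measure.1 hg
  rw [graphBoundaryMeasure, integral_add_measure hup hlow,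
    integral_graphMeasure hG.continuousOn_upper_ball hup.aestronglyMeasurable,
    integral_graphMeasure hG.continuousOn_lower_ball hlow.aestronglyMeasurable]
  exact (integral_add (integrableOn_comp_graphMk_mul_omegaW hG.continuousOn_upper_ball hup)
    (integrableOn_comp_graphMk_mul_omegaW hG.continuousOn_lower_ball hlow)).symm

end IsGraphPair

end GraphMeasure

/-! ### The divergence theorem for compactly supported fields -/

section Divergence

variable {n : ℕ} {D K : Set (Esp n)} {g W : Esp n → ℝ} {H : Esp n → Esp n} {x : Esp n}

/-- The divergence of a vector field on `ℝⁿ`. -/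
def divergence (H : Esp n → Esp n) (x : Esp n) : ℝ :=
  ∑ i, fderiv ℝ H x (EuclideanSpace.single i 1) i

lemma abs_divergence_le {M : ℝ} (hM : ‖fderiv ℝ H x‖ ≤ M) : |divergence H x| ≤ n * M := by
  calc |divergence H x| ≤ ∑ i, |fderiv ℝ H x (EuclideanSpace.single i 1) i| :=
        Finset.abs_sum_le_sum_abs _ _
    _ ≤ ∑ _i : Fin n, M := Finset.sum_le_sum fun i _ =>
        calc |fderiv ℝ H x (EuclideanSpace.single i 1) i|
            ≤ ‖fderiv ℝ H x (EuclideanSpace.single i 1)‖ := by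
              simpa using PiLp.norm_apply_le (fderiv ℝ H x (EuclideanSpace.single i 1)) i
          _ ≤ ‖fderiv ℝ H x‖ := ContinuousLinearMap.unit_le_opNorm _ _ (by simp)
          _ ≤ M := hM
    _ = n * M := by simp

lemma continuousOn_divergence (hD : IsOpen D) (hH : ContDiffOn ℝ 1 H D) :
    ContinuousOn (divergence H) D :=
  continuousOn_finsetSum _ fun i _ =>
    (EuclideanSpace.proj (𝕜 := ℝ) i).continuous.comp_continuousOn
      ((hH.continuousOn_fderiv_of_isOpen hD le_rfl).clm_apply continuousOn_const)

lemma fderiv_apply_add_mul_divergence (hW : DifferentiableAt ℝ W x)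
    (hH : DifferentiableAt ℝ H x) :
    fderiv ℝ W x (H x) + W x * divergence H x
      = ∑ i, fderiv ℝ (fun x => W x * H x i) x (EuclideanSpace.single i 1) := by
  have hHi : ∀ i, HasFDerivAt (fun x => H x i)
      ((EuclideanSpace.proj (𝕜 := ℝ) i).comp (fderiv ℝ H x)) x := fun i =>
    (EuclideanSpace.proj (𝕜 := ℝ) i).hasFDerivAt.comp x hH.hasFDerivAt
  have hbasis : ∑ i, H x i • EuclideanSpace.single i (1 : ℝ) = H x := by
    ext j; simp [Finset.sum_apply, Pi.single_apply]
  have hWH : fderiv ℝ W x (H x) = ∑ i, H x i * fderiv ℝ W x (EuclideanSpace.single i 1) := by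
    conv_lhs => rw [← hbasis]
    simp [map_sum]
  rw [hWH, divergence, Finset.mul_sum, ← Finset.sum_add_distrib]
  refine Finset.sum_congr rfl fun i _ => ?_
  have hprod : HasFDerivAt (fun x => W x * H x i) _ x := hW.hasFDerivAt.mul (hHi i)
  rw [hprod.fderiv]
  simp
  ring

lemma contDiff_of_contDiffOn_of_eq_zero (hD : IsOpen D) (hK : IsClosed K) (hKD : K ⊆ D)
    (hg : ContDiffOn ℝ 1 g D) (hg0 : ∀ x ∉ K, g x = 0) : ContDiff ℝ 1 g := by
  refine contDiff_iff_contDiffAt.2 fun x => ?_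
  by_cases hx : x ∈ D
  · exact hg.contDiffAt (hD.mem_nhds hx)
  · refine (contDiffAt_const (c := (0 : ℝ))).congr_of_eventuallyEq ?_
    filter_upwards [hK.isOpen_compl.mem_nhds fun h => hx (hKD h)] with z hz using hg0 z hz

lemma integral_fderiv_apply_eq_zero (hg : ContDiff ℝ 1 g) (hsupp : HasCompactSupport g)
    (v : Esp n) : ∫ x, fderiv ℝ g x v = 0 := by
  have hderiv : Continuous fun x => fderiv ℝ g x v :=
    (hg.continuous_fderiv one_ne_zero).clm_apply continuous_const
  have hparts := integral_bilinear_hasLineDerivAt_right_eq_neg_left_of_integrable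
    (μ := (volume : Measure (Esp n))) (f := fun _ => (1 : ℝ)) (f' := fun _ => 0) (g := g)
    (g' := fun x => fderiv ℝ g x v) (v := v) (B := ContinuousLinearMap.mul ℝ ℝ)
    (by simp)
    (by simpa using hderiv.integrable_of_hasCompactSupport (hsupp.fderiv_apply (𝕜 := ℝ) v))
    (by simpa using hg.continuous.integrable_of_hasCompactSupport hsupp)
    (fun x _ => by simpa using (hasFDerivAt_const (1 : ℝ) x).hasLineDerivAt v)
    (fun x _ => (hg.differentiable one_ne_zero x).hasFDerivAt.hasLineDerivAt v)
  simpa using hparts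

lemma setIntegral_fderiv_apply_add_mul_divergence (hD : IsOpen D) (hK : IsCompact K)
    (hKD : K ⊆ D) (hW : ContDiffOn ℝ 1 W D) (hW0 : ∀ x ∉ K, W x = 0) (hH : ContDiffOn ℝ 1 H D) :
    ∫ x in D, (fderiv ℝ W x (H x) + W x * divergence H x) = 0 := by
  have hg0 : ∀ i, ∀ x ∉ K, W x * H x i = 0 := fun i x hx => by rw [hW0 x hx, zero_mul]
  have hg : ∀ i, ContDiff ℝ 1 fun x => W x * H x i := fun i =>
    contDiff_of_contDiffOn_of_eq_zero hD hK.isClosed hKD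
      (hW.mul ((EuclideanSpace.proj (𝕜 := ℝ) i).contDiff.comp_contDiffOn hH)) (hg0 i)
  have hsupp : ∀ i, HasCompactSupport fun x => W x * H x i := fun i =>
    HasCompactSupport.intro hK (hg0 i)
  have hderiv : ∀ i, Integrable
      fun x => fderiv ℝ (fun x => W x * H x i) x (EuclideanSpace.single i 1) := fun i =>
    Continuous.integrable_of_hasCompactSupport
      (((hg i).continuous_fderiv one_ne_zero).clm_apply continuous_const)
      ((hsupp i).fderiv_apply (𝕜 := ℝ) _)
  have hderiv0 : ∀ i, ∀ x ∉ D,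
      fderiv ℝ (fun x => W x * H x i) x (EuclideanSpace.single i 1) = 0 := fun i x hx => by
    rw [fderiv_of_notMem_tsupport ℝ fun h => hx <| hKD <|
      closure_minimal (Function.support_subset_iff'.2 (hg0 i)) hK.isClosed h, zero_apply]
  rw [setIntegral_congr_fun hD.measurableSet fun x hx => fderiv_apply_add_mul_divergence
      ((hW.contDiffAt (hD.mem_nhds hx)).differentiableAt one_ne_zero)
      ((hH.contDiffAt (hD.mem_nhds hx)).differentiableAt one_ne_zero),
    integral_finsetSum _ fun i _ => (hderiv i).integrableOn]
  refine Finset.sum_eq_zero fun i _ => ?_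
  rw [setIntegral_eq_integral_of_forall_compl_eq_zero (hderiv0 i)]
  exact integral_fderiv_apply_eq_zero (hg i) (hsupp i) _

end Divergence

/-! ### Functions of class `C¹` up to the boundary -/

section UpToBoundary

variable {E F : Type*} [NormedAddCommGroup E] [NormedSpace ℝ E] [NormedAddCommGroup F]
  [NormedSpace ℝ F] {D : Set E} {g : E → F}

lemma exists_norm_fderiv_le_of_contDiffOn_closure (hD : IsOpen D) (hK : IsCompact (closure D))
    (hg : ContDiffOn ℝ 1 g (closure D)) : ∃ B, ∀ x ∈ D, ‖fderiv ℝ g x‖ ≤ B := by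
  have hlocal : ∀ x ∈ closure D, ∃ B, ∃ u ∈ 𝓝[closure D] x, ∀ z ∈ u ∩ D, ‖fderiv ℝ g z‖ ≤ B := by
    intro x hx
    obtain ⟨u, hu, -, -, g', hg', hcont⟩ :=
      (contDiffWithinAt_succ_iff_hasFDerivWithinAt' (n := 0) (by simp)).1 (hg x hx)
    rw [insert_eq_of_mem hx] at hu
    have hbdd := hcont.continuousWithinAt.norm.eventually_lt_const (lt_add_one ‖g' x‖)
    refine ⟨‖g' x‖ + 1, _, inter_mem hu hbdd, fun z hz => ?_⟩
    rw [((hg' z hz.1.1).hasFDerivAt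
      (mem_of_superset (hD.mem_nhds hz.2) subset_closure)).fderiv]
    exact (show ‖g' z‖ < ‖g' x‖ + 1 from hz.1.2).le
  choose! B u hu hB using hlocal
  obtain ⟨t, ht, hcover⟩ := hK.elim_nhdsWithin_subcover u hu
  refine ⟨∑ x ∈ t, |B x|, fun z hz => ?_⟩
  obtain ⟨x, hx, hzx⟩ := mem_iUnion₂.1 (hcover (subset_closure hz))
  calc ‖fderiv ℝ g z‖ ≤ B x := hB x (ht x hx) z ⟨hzx, hz⟩
    _ ≤ |B x| := le_abs_self _
    _ ≤ ∑ x ∈ t, |B x| := Finset.single_le_sum (f := fun x => |B x|) (fun _ _ => abs_nonneg _) hx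

end UpToBoundary

/-! ### Cutoff functions exhausting the graph domain -/

section Ramp

variable {ε r C : ℝ}

/-- A smooth transition from `0` on `(-∞, ε]` to `1` on `[2 * ε, ∞)`. -/
def ramp (ε r : ℝ) : ℝ := Real.smoothTransition (r / ε - 1)

lemma ramp_nonneg : 0 ≤ ramp ε r := Real.smoothTransition.nonneg _

lemma ramp_le_one : ramp ε r ≤ 1 := Real.smoothTransition.le_one _

lemma abs_ramp_le_one : |ramp ε r| ≤ 1 := by
  rw [abs_of_nonneg ramp_nonneg]
  exact ramp_le_one

lemma ramp_eq_zero (hε : 0 < ε) (hr : r ≤ ε) : ramp ε r = 0 :=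
  Real.smoothTransition.zero_of_nonpos (by rwa [sub_nonpos, div_le_one hε])

lemma ramp_eq_one (hε : 0 < ε) (hr : 2 * ε ≤ r) : ramp ε r = 1 :=
  Real.smoothTransition.one_of_one_le (by rw [le_sub_iff_add_le, le_div_iff₀ hε]; linarith)

lemma contDiff_ramp : ContDiff ℝ 1 (ramp ε) :=
  Real.smoothTransition.contDiff.comp ((contDiff_id.div_const ε).sub contDiff_const)

lemma exists_abs_deriv_smoothTransition_le : ∃ C, ∀ r, |deriv Real.smoothTransition r| ≤ C := by
  have hcont : Continuous (deriv Real.smoothTransition) :=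
    (Real.smoothTransition.contDiff (n := 1)).continuous_deriv le_rfl
  obtain ⟨C, hC⟩ := (isCompact_Icc (a := (0 : ℝ)) (b := 1)).exists_bound_of_continuousOn
    hcont.continuousOn
  refine ⟨C, fun r => ?_⟩
  have hC0 : 0 ≤ C := (norm_nonneg _).trans (hC 0 (by simp))
  by_cases hr : r ∈ Icc (0 : ℝ) 1
  · exact hC r hr
  · suffices deriv Real.smoothTransition r = 0 by simpa [this] using hC0
    rcases not_and_or.1 hr with hr | hr
    · refine IsLocalMin.deriv_eq_zero (.of_forall fun s => ?_)
      rw [Real.smoothTransition.zero_of_nonpos (not_le.1 hr).le]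
      exact Real.smoothTransition.nonneg s
    · refine IsLocalMax.deriv_eq_zero (.of_forall fun s => ?_)
      rw [Real.smoothTransition.one_of_one_le (not_le.1 hr).le]
      exact Real.smoothTransition.le_one s

lemma abs_deriv_ramp_le (hε : 0 < ε) (hC : ∀ r, |deriv Real.smoothTransition r| ≤ C) :
    |deriv (ramp ε) r| ≤ (Ioo ε (2 * ε)).indicator (fun _ => C / ε) r := by
  by_cases hr : r ∈ Ioo ε (2 * ε)
  · have hchain : HasDerivAt (ramp ε) (deriv Real.smoothTransition (r / ε - 1) * (1 / ε)) r :=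
      ((Real.smoothTransition.contDiff (n := 1)).differentiable one_ne_zero
        _).hasDerivAt.comp r (((hasDerivAt_id r).div_const ε).sub_const 1)
    rw [indicator_of_mem hr, hchain.deriv, mul_one_div, abs_div, abs_of_pos hε]
    gcongr
    exact hC _
  · suffices deriv (ramp ε) r = 0 by simp [this, indicator_of_notMem hr]
    rcases not_and_or.1 hr with hr | hr
    · refine IsLocalMin.deriv_eq_zero (.of_forall fun s => ?_)
      rw [ramp_eq_zero hε (not_lt.1 hr)]
      exact ramp_nonneg
    · refine IsLocalMax.deriv_eq_zero (.of_forall fun s => ?_)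
      rw [ramp_eq_one hε (not_lt.1 hr)]
      exact ramp_le_one

lemma abs_fderiv_ramp_mul_ramp_le {E : Type*} [NormedAddCommGroup E] [NormedSpace ℝ E]
    {u v : E → ℝ} {x : E} (hε : 0 < ε) (hC : ∀ r, |deriv Real.smoothTransition r| ≤ C)
    (hu : DifferentiableAt ℝ u x) (hv : DifferentiableAt ℝ v x) (e : E) :
    |fderiv ℝ (fun x => ramp ε (u x) * ramp ε (v x)) x e|
      ≤ (Ioo ε (2 * ε)).indicator (fun _ => C / ε) (u x) * |fderiv ℝ u x e|
        + (Ioo ε (2 * ε)).indicator (fun _ => C / ε) (v x) * |fderiv ℝ v x e| := by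
  have hramp : ∀ {w : E → ℝ}, DifferentiableAt ℝ w x →
      HasFDerivAt (fun x => ramp ε (w x)) (deriv (ramp ε) (w x) • fderiv ℝ w x) x := fun hw =>
    (contDiff_ramp.differentiable one_ne_zero _).hasDerivAt.comp_hasFDerivAt x hw.hasFDerivAt
  have hprod : HasFDerivAt (fun x => ramp ε (u x) * ramp ε (v x)) _ x := (hramp hu).mul (hramp hv)
  have hfactor : ∀ r s t : ℝ, |ramp ε r * (deriv (ramp ε) s * t)|
      ≤ (Ioo ε (2 * ε)).indicator (fun _ => C / ε) s * |t| := fun r s t => by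
    rw [abs_mul, abs_mul]
    exact (mul_le_of_le_one_left (by positivity) abs_ramp_le_one).trans
      (by gcongr; exact abs_deriv_ramp_le hε hC)
  rw [hprod.fderiv, add_comm ((Ioo ε (2 * ε)).indicator _ (u x) * _)]
  exact (abs_add_le _ _).trans (add_le_add (hfactor _ _ _) (hfactor _ _ _))

end Ramp

section GraphCutoff

variable {d : ℕ} {ρ ε : ℝ} {ℓ ℓt : Esp d → ℝ}

/-- The points of the graph domain at vertical distance at least `ε` from the boundary. -/
def graphCore (d : ℕ) (ρ : ℝ) (ℓ ℓt : Esp d → ℝ) (ε : ℝ) : Set (Esp (d + 1)) :=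
  {x | horiz d x ∈ closedBall 0 ρ ∧ ε ≤ -graphHeight d ℓ x ∧
    ε ≤ graphHeight d (fun z => ℓ z - ℓt z) x}

/-- A cutoff function of class `C¹`, supported in `graphCore d ρ ℓ ℓt ε` and equal to one on
`graphCore d ρ ℓ ℓt (2 * ε)`. -/
def graphCutoff (d : ℕ) (ρ : ℝ) (ℓ ℓt : Esp d → ℝ) (ε : ℝ) : Esp (d + 1) → ℝ :=
  (graphDomain d ρ ℓ ℓt).indicator fun x =>
    ramp ε (-graphHeight d ℓ x) * ramp ε (graphHeight d (fun z => ℓ z - ℓt z) x)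

lemma abs_graphCutoff_le_one (x : Esp (d + 1)) : |graphCutoff d ρ ℓ ℓt ε x| ≤ 1 := by
  unfold graphCutoff indicator
  split_ifs
  · rw [abs_mul]
    exact mul_le_one₀ abs_ramp_le_one (abs_nonneg _) abs_ramp_le_one
  · simp

lemma mem_graphDomain_iff_graphHeight {x : Esp (d + 1)} :
    x ∈ graphDomain d ρ ℓ ℓt ↔ horiz d x ∈ ball 0 ρ ∧
      0 < graphHeight d (fun z => ℓ z - ℓt z) x ∧ 0 < -graphHeight d ℓ x := by
  simp only [mem_graphDomain_iff, graphHeight, sub_pos, neg_sub]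

lemma graphCutoff_eq_zero (hε : 0 < ε) {x : Esp (d + 1)} (hx : x ∉ graphCore d ρ ℓ ℓt ε) :
    graphCutoff d ρ ℓ ℓt ε x = 0 := by
  unfold graphCutoff indicator
  split_ifs with hD
  · change ramp ε _ * ramp ε _ = 0
    have hball := ball_subset_closedBall (mem_graphDomain_iff.1 hD).1
    rcases not_and_or.1 (not_and.1 hx hball) with h | h
    · rw [ramp_eq_zero hε (not_le.1 h).le, zero_mul]
    · rw [ramp_eq_zero hε (not_le.1 h).le, mul_zero]
  · rfl

lemma tendsto_graphCutoff {x : Esp (d + 1)} (hx : x ∈ graphDomain d ρ ℓ ℓt) :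
    Tendsto (fun ε => graphCutoff d ρ ℓ ℓt ε x) (𝓝[>] 0) (𝓝 1) := by
  refine tendsto_const_nhds.congr' ?_
  obtain ⟨-, hlow, hup⟩ := mem_graphDomain_iff_graphHeight.1 hx
  filter_upwards [Ioo_mem_nhdsGT (half_pos (lt_min hup hlow))] with ε hε
  have hmin : 2 * ε ≤ min (-graphHeight d ℓ x) (graphHeight d (fun z => ℓ z - ℓt z) x) := by
    linarith [hε.2]
  rw [graphCutoff, indicator_of_mem hx, ramp_eq_one hε.1 (hmin.trans (min_le_left _ _)),
    ramp_eq_one hε.1 (hmin.trans (min_le_right _ _)), one_mul]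

lemma contDiffOn_graphHeight {c : Esp d → ℝ} {s : Set (Esp d)} (hc : ContDiffOn ℝ 1 c s) :
    ContDiffOn ℝ 1 (graphHeight d c) (horiz d ⁻¹' s) :=
  (vert d).contDiff.contDiffOn.sub (hc.comp (horiz d).contDiff.contDiffOn (mapsTo_preimage _ _))

lemma abs_fderiv_graphHeight_le {c : Esp d → ℝ} {x : Esp (d + 1)}
    (hc : DifferentiableAt ℝ c (horiz d x)) (e : Esp (d + 1)) :
    |fderiv ℝ (graphHeight d c) x e| ≤ omegaW d c (horiz d x) * ‖e‖ := by
  have hderiv : HasFDerivAt (graphHeight d c)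
      (vert d - (fderiv ℝ c (horiz d x)).comp (horiz d)) x :=
    (vert d).hasFDerivAt.sub (hc.hasFDerivAt.comp x (horiz d).hasFDerivAt)
  have hgrad : |fderiv ℝ c (horiz d x) (horiz d e)| ≤ ‖gradient c (horiz d x)‖ * ‖horiz d e‖ := by
    rw [← InnerProductSpace.toDual_symm_apply]
    exact abs_real_inner_le_norm _ _
  rw [hderiv.fderiv]
  calc |vert d e - fderiv ℝ c (horiz d x) (horiz d e)|
      ≤ |vert d e| + ‖gradient c (horiz d x)‖ * ‖horiz d e‖ := (abs_sub _ _).trans (by gcongr)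
    _ ≤ √((1 + ‖gradient c (horiz d x)‖ ^ 2) * ‖e‖ ^ 2) := by
      refine Real.le_sqrt_of_sq_le ?_
      rw [norm_sq_eq_horiz_add_vert d e, ← sq_abs (vert d e)]
      nlinarith [sq_nonneg (‖gradient c (horiz d x)‖ * |vert d e| - ‖horiz d e‖)]
    _ = omegaW d c (horiz d x) * ‖e‖ := by
      rw [Real.sqrt_mul (by positivity), Real.sqrt_sq (norm_nonneg e), omegaW]

lemma indicator_mul_abs_fderiv_graphHeight_le {c : Esp d → ℝ} {s : Set ℝ} {a b r C : ℝ}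
    {x : Esp (d + 1)} (hc : DifferentiableAt ℝ c (horiz d x)) (hC : 0 ≤ C)
    (hx : horiz d x ∈ ball 0 ρ) (hr : r ∈ s ↔ graphHeight d c x ∈ Ioo a b) (e : Esp (d + 1)) :
    s.indicator (fun _ => C) r * |fderiv ℝ (graphHeight d c) x e|
      ≤ C * ‖e‖ * (graphStrip d ρ a b c).indicator (fun x => omegaW d c (horiz d x)) x := by
  by_cases hrs : r ∈ s
  · rw [indicator_of_mem hrs, indicator_of_mem (show x ∈ graphStrip d ρ a b c from
      ⟨hx, hr.1 hrs⟩), mul_assoc, mul_comm ‖e‖]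
    exact mul_le_mul_of_nonneg_left (abs_fderiv_graphHeight_le hc e) hC
  · rw [indicator_of_notMem hrs, zero_mul]
    exact mul_nonneg (by positivity) (indicator_nonneg (fun _ _ => omegaW_nonneg) _)

namespace IsGraphPair

variable (hG : IsGraphPair d ρ ℓ ℓt)
include hG

lemma graphCore_subset (hε : 0 < ε) : graphCore d ρ ℓ ℓt ε ⊆ graphDomain d ρ ℓ ℓt := by
  rintro x ⟨hball, hup, hlow⟩
  refine mem_graphDomain_iff_graphHeight.2 ⟨?_, by linarith, by linarith⟩
  rw [mem_closedBall_zero_iff] at hball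
  refine mem_ball_zero_iff.2 (hball.lt_of_ne fun hsphere => ?_)
  simp only [graphHeight, hG.thickness_eq_zero _ hsphere] at hup hlow
  linarith

lemma isCompact_graphCore (hε : 0 < ε) : IsCompact (graphCore d ρ ℓ ℓt ε) := by
  refine isCompact_of_isClosed_isBounded ?_
    (hG.isBounded_graphDomain.subset (hG.graphCore_subset hε))
  have hclosed : IsClosed (horiz d ⁻¹' closedBall 0 ρ) :=
    isClosed_closedBall.preimage (horiz d).continuous
  have hup := (contDiffOn_graphHeight hG.contDiffOn_upper).continuousOn.neg
  have hlow := (contDiffOn_graphHeight hG.contDiffOn_lower).continuousOn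
  exact (hup.prodMk hlow).preimage_isClosed_of_isClosed hclosed
    ((isClosed_Ici (a := ε)).prod (isClosed_Ici (a := ε)))

lemma contDiffOn_graphCutoff : ContDiffOn ℝ 1 (graphCutoff d ρ ℓ ℓt ε) (graphDomain d ρ ℓ ℓt) := by
  have hsub : graphDomain d ρ ℓ ℓt ⊆ horiz d ⁻¹' closedBall 0 ρ := fun _ hx =>
    ball_subset_closedBall (mem_graphDomain_iff.1 hx).1
  have hup := (contDiffOn_graphHeight hG.contDiffOn_upper).mono hsub
  have hlow := (contDiffOn_graphHeight hG.contDiffOn_lower).mono hsub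
  exact ((contDiff_ramp.comp_contDiffOn hup.neg).mul (contDiff_ramp.comp_contDiffOn hlow)).congr
    fun x hx => indicator_of_mem hx _

lemma abs_fderiv_graphCutoff_le {C : ℝ} (hε : 0 < ε)
    (hC : ∀ r, |deriv Real.smoothTransition r| ≤ C) {x : Esp (d + 1)}
    (hx : x ∈ graphDomain d ρ ℓ ℓt) (e : Esp (d + 1)) :
    |fderiv ℝ (graphCutoff d ρ ℓ ℓt ε) x e| ≤ C / ε * ‖e‖ *
      ((graphStrip d ρ (-(2 * ε)) (-ε) ℓ).indicator (fun x => omegaW d ℓ (horiz d x)) x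
        + (graphStrip d ρ ε (2 * ε) fun z => ℓ z - ℓt z).indicator
          (fun x => omegaW d (fun z => ℓ z - ℓt z) (horiz d x)) x) := by
  have hxball := (mem_graphDomain_iff.1 hx).1
  have hdiff : ∀ {c : Esp d → ℝ}, ContDiffOn ℝ 1 c (closedBall 0 ρ) →
      DifferentiableAt ℝ c (horiz d x) := fun hc => (hc.contDiffAt <| mem_of_superset
    (isOpen_ball.mem_nhds hxball) ball_subset_closedBall).differentiableAt one_ne_zero
  have hC0 : 0 ≤ C / ε := div_nonneg ((abs_nonneg _).trans (hC 0)) hε.le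
  have hheight : ∀ {c : Esp d → ℝ}, ContDiffOn ℝ 1 c (closedBall 0 ρ) →
      DifferentiableAt ℝ (graphHeight d c) x := fun hc =>
    (vert d).differentiableAt.sub ((hdiff hc).comp x (horiz d).differentiableAt)
  have hlocal : graphCutoff d ρ ℓ ℓt ε =ᶠ[𝓝 x] fun x =>
      ramp ε (-graphHeight d ℓ x) * ramp ε (graphHeight d (fun z => ℓ z - ℓt z) x) :=
    mem_of_superset (hG.isOpen_graphDomain.mem_nhds hx) fun z hz => indicator_of_mem hz _
  rw [hlocal.fderiv_eq, mul_add]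
  refine (abs_fderiv_ramp_mul_ramp_le hε hC (hheight hG.contDiffOn_upper).neg
    (hheight hG.contDiffOn_lower) e).trans (add_le_add ?_
      (indicator_mul_abs_fderiv_graphHeight_le (hdiff hG.contDiffOn_lower) hC0 hxball Iff.rfl e))
  rw [fderiv_neg, neg_apply, abs_neg]
  refine indicator_mul_abs_fderiv_graphHeight_le (hdiff hG.contDiffOn_upper) hC0 hxball ?_ e
  rw [Pi.neg_apply, mem_Ioo, mem_Ioo, lt_neg, neg_lt, and_comm]

end IsGraphPair

end GraphCutoff

/-! ### The flux inequality -/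

section FluxMeasure

variable {n : ℕ} {D : Set (Esp n)} {g : Esp n → ℝ} {H : Esp n → Esp n} {M : ℝ}

/-- The finite measure `σ` on the closure of `D` dominates, up to the factor `C`, the flux of every
field `g H` through the boundary of `D`. The flux is encoded by the integral of the divergence over
`D`, so that no normal vector or regularity of the boundary enters. -/
structure IsFluxMeasure (D : Set (Esp n)) (σ : Measure (Esp n)) (C : ℝ) : Prop where
  nonneg : 0 ≤ C
  isFiniteMeasure : IsFiniteMeasure σ
  ae_mem_closure : ∀ᵐ x ∂σ, x ∈ closure D
  abs_setIntegral_le : ∀ {M : ℝ} {g : Esp n → ℝ} {H : Esp n → Esp n},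
    ContDiffOn ℝ 1 g (closure D) → ContDiffOn ℝ 1 H D → (∀ x ∈ D, ‖H x‖ ≤ M) →
    (∀ x ∈ D, ‖fderiv ℝ H x‖ ≤ M) →
    |∫ x in D, (fderiv ℝ g x (H x) + g x * divergence H x)| ≤ C * M * ∫ x, |g x| ∂σ

lemma integrable_of_continuousOn_of_ae_mem {X : Type*} [TopologicalSpace X] [T2Space X]
    [MeasurableSpace X] [OpensMeasurableSpace X] {μ : Measure X} [IsFiniteMeasure μ] {K : Set X}
    {g : X → ℝ} (hK : IsCompact K) (hμ : ∀ᵐ x ∂μ, x ∈ K) (hg : ContinuousOn g K) :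
    Integrable g μ := by
  rw [← Measure.restrict_eq_self_of_ae_mem hμ]
  exact hg.integrableOn_compact hK

lemma integrableOn_fderiv_apply_add_mul_divergence (hD : IsOpen D) (hK : IsCompact (closure D))
    (hg : ContDiffOn ℝ 1 g (closure D)) (hH : ContDiffOn ℝ 1 H D) (hM : ∀ x ∈ D, ‖H x‖ ≤ M)
    (hM' : ∀ x ∈ D, ‖fderiv ℝ H x‖ ≤ M) :
    IntegrableOn (fun x => fderiv ℝ g x (H x) + g x * divergence H x) D := by
  obtain ⟨B, hB⟩ := exists_norm_fderiv_le_of_contDiffOn_closure hD hK hg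
  obtain ⟨A, hA⟩ := hK.exists_bound_of_continuousOn hg.continuousOn
  have hgD := hg.mono subset_closure
  have hcont : ContinuousOn (fun x => fderiv ℝ g x (H x) + g x * divergence H x) D :=
    ((hgD.continuousOn_fderiv_of_isOpen hD le_rfl).clm_apply hH.continuousOn).add
      (hgD.continuousOn.mul (continuousOn_divergence hD hH))
  refine IntegrableOn.of_bound ((measure_mono subset_closure).trans_lt hK.measure_lt_top)
    (hcont.aestronglyMeasurable hD.measurableSet) (B * M + A * (n * M)) ?_
  refine (ae_restrict_iff' hD.measurableSet).2 (ae_of_all _ fun x hx => ?_)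
  refine (norm_add_le _ _).trans (add_le_add ?_ ?_)
  · exact (ContinuousLinearMap.le_of_opNorm_le _ (hB x hx) _).trans <|
      mul_le_mul_of_nonneg_left (hM x hx) ((norm_nonneg _).trans (hB x hx))
  · rw [norm_mul]
    exact mul_le_mul (hA x (subset_closure hx)) (abs_divergence_le (hM' x hx)) (norm_nonneg _)
      ((norm_nonneg _).trans (hA x (subset_closure hx)))

end FluxMeasure

namespace IsGraphPair

variable {d : ℕ} {ρ ε : ℝ} {ℓ ℓt : Esp d → ℝ} {g : Esp (d + 1) → ℝ}
  {H : Esp (d + 1) → Esp (d + 1)} {M C η : ℝ} (hG : IsGraphPair d ρ ℓ ℓt)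
include hG

lemma setIntegral_graphCutoff_mul_eq (hε : 0 < ε)
    (hg : ContDiffOn ℝ 1 g (closure (graphDomain d ρ ℓ ℓt)))
    (hH : ContDiffOn ℝ 1 H (graphDomain d ρ ℓ ℓt))
    (hM : ∀ x ∈ graphDomain d ρ ℓ ℓt, ‖H x‖ ≤ M)
    (hM' : ∀ x ∈ graphDomain d ρ ℓ ℓt, ‖fderiv ℝ H x‖ ≤ M) :
    ∫ x in graphDomain d ρ ℓ ℓt,
        graphCutoff d ρ ℓ ℓt ε x * (fderiv ℝ g x (H x) + g x * divergence H x)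
      = ∫ x in graphDomain d ρ ℓ ℓt, -(g x * fderiv ℝ (graphCutoff d ρ ℓ ℓt ε) x (H x)) := by
  set D := graphDomain d ρ ℓ ℓt
  set χ := graphCutoff d ρ ℓ ℓt ε
  have hD : IsOpen D := hG.isOpen_graphDomain
  have hcore := hG.isCompact_graphCore hε
  have hχ : ContDiffOn ℝ 1 χ D := hG.contDiffOn_graphCutoff
  have hχg : ContDiffOn ℝ 1 (fun x => χ x * g x) D := hχ.mul (hg.mono subset_closure)
  have hχg0 : ∀ x ∉ graphCore d ρ ℓ ℓt ε, χ x * g x = 0 := fun x hx => by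
    simp only [χ, graphCutoff_eq_zero hε hx, zero_mul]
  have hint : IntegrableOn (fun x => χ x * (fderiv ℝ g x (H x) + g x * divergence H x)) D :=
    (integrableOn_fderiv_apply_add_mul_divergence hD hG.isCompact_closure hg hH hM hM').bdd_mul
      (hχ.continuousOn.aestronglyMeasurable hD.measurableSet)
      (ae_of_all _ abs_graphCutoff_le_one)
  have hint' := integrableOn_fderiv_apply_add_mul_divergence hD hG.isCompact_closure
    (contDiff_of_contDiffOn_of_eq_zero hD hcore.isClosed (hG.graphCore_subset hε) hχg
      hχg0).contDiffOn hH hM hM'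
  rw [← sub_zero (∫ x in D, _), ← setIntegral_fderiv_apply_add_mul_divergence hD hcore
    (hG.graphCore_subset hε) hχg hχg0 hH, ← integral_sub hint hint']
  refine setIntegral_congr_fun hD.measurableSet fun x hx => ?_
  have hχx := (hχ.contDiffAt (hD.mem_nhds hx)).differentiableAt one_ne_zero
  have hgx := ((hg.mono subset_closure).contDiffAt (hD.mem_nhds hx)).differentiableAt one_ne_zero
  simp only [fderiv_fun_mul hχx hgx, add_apply, smul_apply, smul_eq_mul]
  ring

lemma abs_mul_fderiv_graphCutoff_le (hε : 0 < ε)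
    (hC : ∀ r, |deriv Real.smoothTransition r| ≤ C)
    (hosc : ∀ x ∈ closure (graphDomain d ρ ℓ ℓt), ∀ z ∈ closure (graphDomain d ρ ℓ ℓt),
      dist x z ≤ 2 * ε → |g x| ≤ |g z| + η) {x : Esp (d + 1)} (hx : x ∈ graphDomain d ρ ℓ ℓt)
    (hM : ‖H x‖ ≤ M) :
    |g x * fderiv ℝ (graphCutoff d ρ ℓ ℓt ε) x (H x)| ≤ C * M / ε *
      ((graphStrip d ρ (-(2 * ε)) (-ε) ℓ).indicator
          (fun x => (|g (graphProj d ℓ x)| + η) * omegaW d ℓ (horiz d x)) x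
        + (graphStrip d ρ ε (2 * ε) fun z => ℓ z - ℓt z).indicator
          (fun x => (|g (graphProj d (fun z => ℓ z - ℓt z) x)| + η)
            * omegaW d (fun z => ℓ z - ℓt z) (horiz d x)) x) := by
  have hball := (mem_graphDomain_iff.1 hx).1
  have hC0 : 0 ≤ C := (abs_nonneg _).trans (hC 0)
  have hstrip : ∀ {c : Esp d → ℝ} {a b : ℝ}, -(2 * ε) ≤ a → b ≤ 2 * ε →
      graphProj d c x ∈ closure (graphDomain d ρ ℓ ℓt) →
      |g x| * (graphStrip d ρ a b c).indicator (fun x => omegaW d c (horiz d x)) x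
        ≤ (graphStrip d ρ a b c).indicator
          (fun x => (|g (graphProj d c x)| + η) * omegaW d c (horiz d x)) x := by
    intro c a b ha hb hproj
    by_cases hxs : x ∈ graphStrip d ρ a b c
    · rw [indicator_of_mem hxs, indicator_of_mem hxs]
      refine mul_le_mul_of_nonneg_right (hosc x (subset_closure hx) _ hproj ?_) omegaW_nonneg
      rw [dist_graphProj, abs_le]
      exact ⟨ha.trans hxs.2.1.le, hxs.2.2.le.trans hb⟩
    · rw [indicator_of_notMem hxs, indicator_of_notMem hxs, mul_zero]
  have hM0 : 0 ≤ M := (norm_nonneg _).trans hM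
  have hderiv := (hG.abs_fderiv_graphCutoff_le hε hC hx (H x)).trans <|
    mul_le_mul_of_nonneg_right (mul_le_mul_of_nonneg_left hM (div_nonneg hC0 hε.le)) <|
      add_nonneg (indicator_nonneg (fun _ _ => omegaW_nonneg) _)
        (indicator_nonneg (fun _ _ => omegaW_nonneg) _)
  rw [abs_mul, mul_div_right_comm C M ε]
  refine (mul_le_mul_of_nonneg_left hderiv (abs_nonneg _)).trans ?_
  rw [mul_left_comm, mul_add |g x|]
  refine mul_le_mul_of_nonneg_left (add_le_add ?_ ?_) (by positivity)
  · exact hstrip le_rfl (by linarith) (hG.upper_mem_closure hball)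
  · exact hstrip (by linarith) le_rfl (hG.lower_mem_closure hball)

lemma abs_setIntegral_graphCutoff_mul_le (hε : 0 < ε)
    (hC : ∀ r, |deriv Real.smoothTransition r| ≤ C)
    (hg : ContDiffOn ℝ 1 g (closure (graphDomain d ρ ℓ ℓt)))
    (hosc : ∀ x ∈ closure (graphDomain d ρ ℓ ℓt), ∀ z ∈ closure (graphDomain d ρ ℓ ℓt),
      dist x z ≤ 2 * ε → |g x| ≤ |g z| + η)
    (hH : ContDiffOn ℝ 1 H (graphDomain d ρ ℓ ℓt))
    (hM : ∀ x ∈ graphDomain d ρ ℓ ℓt, ‖H x‖ ≤ M)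
    (hM' : ∀ x ∈ graphDomain d ρ ℓ ℓt, ‖fderiv ℝ H x‖ ≤ M) :
    |∫ x in graphDomain d ρ ℓ ℓt,
        graphCutoff d ρ ℓ ℓt ε x * (fderiv ℝ g x (H x) + g x * divergence H x)|
      ≤ C * M * ∫ x, (|g x| + η) ∂graphBoundaryMeasure d ρ ℓ ℓt := by
  have := hG.isFiniteMeasure_graphBoundaryMeasure
  have hint : Integrable (fun x => |g x| + η) (graphBoundaryMeasure d ρ ℓ ℓt) :=
    integrable_of_continuousOn_of_ae_mem hG.isCompact_closure
      hG.ae_graphBoundaryMeasure_mem_closure (hg.continuousOn.abs.add continuousOn_const)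
  obtain ⟨hint_up, hint_low⟩ := integrable_add_measure.1 hint
  have hup := isOpen_graphStrip (a := -(2 * ε)) (b := -ε) hG.continuousOn_upper_ball
  have hlow := isOpen_graphStrip (a := ε) (b := 2 * ε) hG.continuousOn_lower_ball
  have hF_up := (integrableOn_graphStrip_graphProj hG.continuousOn_upper_ball
    hint_up).integrable_indicator hup.measurableSet
  have hF_low := (integrableOn_graphStrip_graphProj hG.continuousOn_lower_ball
    hint_low).integrable_indicator hlow.measurableSet
  have hF := (hF_up.add hF_low).const_mul (C * M / ε)
  obtain ⟨x₀, hx₀⟩ := hG.nonempty_graphDomain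
  have hη : 0 ≤ η := by
    have := hosc x₀ (subset_closure hx₀) x₀ (subset_closure hx₀) (by simpa using hε.le)
    linarith
  have hCM : 0 ≤ C * M / ε := div_nonneg
    (mul_nonneg ((abs_nonneg _).trans (hC 0)) ((norm_nonneg _).trans (hM x₀ hx₀))) hε.le
  rw [hG.setIntegral_graphCutoff_mul_eq hε hg hH hM hM']
  calc ‖∫ x in graphDomain d ρ ℓ ℓt, -(g x * fderiv ℝ (graphCutoff d ρ ℓ ℓt ε) x (H x))‖
      ≤ ∫ x in graphDomain d ρ ℓ ℓt, _ :=
        norm_integral_le_of_norm_le hF.integrableOn <|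
          (ae_restrict_iff' hG.isOpen_graphDomain.measurableSet).2 <| ae_of_all _ fun x hx =>
            (norm_neg _).trans_le (hG.abs_mul_fderiv_graphCutoff_le hε hC hosc hx (hM x hx))
    _ ≤ ∫ x, _ := setIntegral_le_integral hF <| ae_of_all _ fun x => mul_nonneg hCM <|
        add_nonneg (indicator_nonneg (fun _ _ => mul_nonneg (by positivity) omegaW_nonneg) _)
          (indicator_nonneg (fun _ _ => mul_nonneg (by positivity) omegaW_nonneg) _)
    _ = C * M * ∫ x, (|g x| + η) ∂graphBoundaryMeasure d ρ ℓ ℓt := by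
        rw [integral_const_mul]
        simp only [Pi.add_apply]
        rw [integral_add hF_up hF_low, integral_indicator hup.measurableSet,
          integral_indicator hlow.measurableSet,
          setIntegral_graphStrip_graphProj (by linarith) hG.continuousOn_upper_ball hint_up,
          setIntegral_graphStrip_graphProj (by linarith) hG.continuousOn_lower_ball hint_low,
          graphBoundaryMeasure, integral_add_measure hint_up hint_low]
        field_simp
        ring

lemma tendsto_setIntegral_graphCutoff_mul {I : Esp (d + 1) → ℝ}
    (hI : IntegrableOn I (graphDomain d ρ ℓ ℓt)) :
    Tendsto (fun ε => ∫ x in graphDomain d ρ ℓ ℓt, graphCutoff d ρ ℓ ℓt ε x * I x) (𝓝[>] 0)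
      (𝓝 (∫ x in graphDomain d ρ ℓ ℓt, I x)) := by
  have hD := hG.isOpen_graphDomain.measurableSet
  refine tendsto_integral_filter_of_dominated_convergence (fun x => |I x|)
    (.of_forall fun ε => ?_) (.of_forall fun ε => ae_of_all _ fun x => ?_) hI.abs ?_
  · exact (hG.contDiffOn_graphCutoff.continuousOn.aestronglyMeasurable hD).mul
      hI.aestronglyMeasurable
  · rw [Real.norm_eq_abs, abs_mul]
    exact mul_le_of_le_one_left (abs_nonneg _) (abs_graphCutoff_le_one x)
  · refine (ae_restrict_iff' hD).2 (ae_of_all _ fun x hx => ?_)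
    simpa only [one_mul] using (tendsto_graphCutoff hx).mul_const (I x)

lemma isFluxMeasure (hC : ∀ r, |deriv Real.smoothTransition r| ≤ C) :
    IsFluxMeasure (graphDomain d ρ ℓ ℓt) (graphBoundaryMeasure d ρ ℓ ℓt) C where
  nonneg := (abs_nonneg _).trans (hC 0)
  isFiniteMeasure := hG.isFiniteMeasure_graphBoundaryMeasure
  ae_mem_closure := hG.ae_graphBoundaryMeasure_mem_closure
  abs_setIntegral_le := by
    intro M g H hg hH hM hM'
    have := hG.isFiniteMeasure_graphBoundaryMeasure
    set D := graphDomain d ρ ℓ ℓt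
    set σ := graphBoundaryMeasure d ρ ℓ ℓt
    set I : Esp (d + 1) → ℝ := fun x => fderiv ℝ g x (H x) + g x * divergence H x
    have hD : IsOpen D := hG.isOpen_graphDomain
    have hI : IntegrableOn I D :=
      integrableOn_fderiv_apply_add_mul_divergence hD hG.isCompact_closure hg hH hM hM'
    have hgσ : Integrable (fun x => |g x|) σ :=
      integrable_of_continuousOn_of_ae_mem hG.isCompact_closure
        hG.ae_graphBoundaryMeasure_mem_closure hg.continuousOn.abs
    have hlim := (hG.tendsto_setIntegral_graphCutoff_mul hI).abs
    have hη : ∀ η > 0, |∫ x in D, I x| ≤ C * M * ∫ x, (|g x| + η) ∂σ := by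
      intro η hη
      obtain ⟨δ, hδ, hunif⟩ := Metric.uniformContinuousOn_iff.1
        (hG.isCompact_closure.uniformContinuousOn_of_continuous hg.continuousOn) η hη
      refine le_of_tendsto hlim ?_
      filter_upwards [Ioo_mem_nhdsGT (half_pos hδ)] with ε hε
      refine hG.abs_setIntegral_graphCutoff_mul_le hε.1 hC hg (fun x hx z hz hxz => ?_) hH hM hM'
      have hlt := hunif x hx z hz (by linarith [hε.2])
      have htri := abs_sub_abs_le_abs_sub (g x) (g z)
      rw [Real.dist_eq] at hlt
      linarith
    have hlim' : Tendsto (fun η => C * M * ∫ x, (|g x| + η) ∂σ) (𝓝[>] 0)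
        (𝓝 (C * M * ∫ x, |g x| ∂σ)) := by
      simp only [integral_add hgσ (integrable_const _), integral_const, smul_eq_mul]
      refine ((Continuous.tendsto' ?_ _ _ ?_).mono_left nhdsWithin_le_nhds) <;> [fun_prop; simp]
    exact ge_of_tendsto hlim' (eventually_mem_nhdsWithin.mono hη)

end IsGraphPair

/-! ### Time derivatives -/

/-- The time derivative `∂ₜ g`, one-sided at the endpoints of `[0, T]`, where the two-sided `deriv`
of a function known only on `[0, T]` carries no information. -/
def timeDeriv {X : Type*} (T : ℝ) (g : X → ℝ → ℝ) (x : X) (t : ℝ) : ℝ :=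
  derivWithin (g x) (Icc 0 T) t

lemma deriv_eq_timeDeriv {X : Type*} {T t : ℝ} {g : X → ℝ → ℝ} {x : X} (ht : t ∈ Ioo 0 T) :
    deriv (g x) t = timeDeriv T g x t :=
  (derivWithin_of_mem_nhds (Icc_mem_nhds ht.1 ht.2)).symm

lemma deriv_sq_le_timeDeriv_sq {X : Type*} {T t : ℝ} {g : X → ℝ → ℝ} {x : X} (hT : 0 < T)
    (ht : t ∈ Icc 0 T) : deriv (g x) t ^ 2 ≤ timeDeriv T g x t ^ 2 := by
  by_cases h : DifferentiableAt ℝ (g x) t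
  · rw [timeDeriv, h.derivWithin (uniqueDiffOn_Icc hT t ht)]
  · rw [deriv_zero_of_not_differentiableAt h, zero_pow two_ne_zero]
    positivity

lemma prod_Icc_mem_nhds {X : Type*} [TopologicalSpace X] {D : Set X} {T t : ℝ} {x : X}
    (hD : IsOpen D) (hx : x ∈ D) (ht : t ∈ Ioo 0 T) : D ×ˢ Icc 0 T ∈ 𝓝 (x, t) :=
  prod_mem_nhds (hD.mem_nhds hx) (Icc_mem_nhds ht.1 ht.2)

section TimeDeriv

variable {E : Type*} [NormedAddCommGroup E] [NormedSpace ℝ E] {T t : ℝ} {K D : Set E}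
  {g : E → ℝ → ℝ} {x v : E}

lemma hasDerivWithinAt_time {g' : E × ℝ →L[ℝ] ℝ}
    (h : HasFDerivWithinAt (uncurry g) g' (K ×ˢ Icc 0 T) (x, t)) (hx : x ∈ K) :
    HasDerivWithinAt (g x) (g' (0, 1)) (Icc 0 T) t :=
  h.comp_hasDerivWithinAt (f := fun s => (x, s)) t
    ((hasDerivWithinAt_const t _ x).prodMk (hasDerivWithinAt_id t _)) fun _ hs => ⟨hx, hs⟩

lemma timeDeriv_eq_of_hasFDerivWithinAt {g' : E × ℝ →L[ℝ] ℝ} (hT : 0 < T)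
    (h : HasFDerivWithinAt (uncurry g) g' (K ×ˢ Icc 0 T) (x, t)) (hx : x ∈ K) (ht : t ∈ Icc 0 T) :
    timeDeriv T g x t = g' (0, 1) :=
  (hasDerivWithinAt_time h hx).derivWithin (uniqueDiffOn_Icc hT t ht)

lemma hasDerivWithinAt_timeDeriv (hg : DifferentiableOn ℝ (uncurry g) (K ×ˢ Icc 0 T)) (hx : x ∈ K)
    (ht : t ∈ Icc 0 T) : HasDerivWithinAt (g x) (timeDeriv T g x t) (Icc 0 T) t :=
  (hasDerivWithinAt_time (hg (x, t) ⟨hx, ht⟩).hasFDerivWithinAt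
    hx).differentiableWithinAt.hasDerivWithinAt

lemma contDiffOn_timeDeriv {m : ℕ} (hT : 0 < T)
    (hg : ContDiffOn ℝ (m + 1) (uncurry g) (K ×ˢ Icc 0 T)) :
    ContDiffOn ℝ m (uncurry (timeDeriv T g)) (K ×ˢ Icc 0 T) := by
  intro q hq
  obtain ⟨u, hu, hus, -, g', hg', hcont⟩ :=
    (contDiffWithinAt_succ_iff_hasFDerivWithinAt' (by simp)).1 (hg q hq)
  rw [insert_eq_of_mem hq] at hu hus
  have heq : ∀ p ∈ u, uncurry (timeDeriv T g) p = g' p (0, 1) := fun p hp =>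
    timeDeriv_eq_of_hasFDerivWithinAt hT (hg' p hp) (hus hp).1 (hus hp).2
  exact (hcont.clm_apply contDiffWithinAt_const).congr_of_eventuallyEq
    (mem_of_superset hu heq) (heq q (mem_of_mem_nhdsWithin hq hu))

lemma continuousOn_timeDeriv (hT : 0 < T) (hg : ContDiffOn ℝ 1 (uncurry g) (K ×ˢ Icc 0 T)) :
    ContinuousOn (uncurry (timeDeriv T g)) (K ×ˢ Icc 0 T) :=
  (contDiffOn_timeDeriv (m := 0) hT (by simpa only [Nat.cast_zero, zero_add])).continuousOn

lemma timeDeriv_eq_fderiv (hg : DifferentiableAt ℝ (uncurry g) (x, t)) (ht : t ∈ Ioo 0 T) :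
    timeDeriv T g x t = fderiv ℝ (uncurry g) (x, t) (0, 1) :=
  timeDeriv_eq_of_hasFDerivWithinAt (ht.1.trans ht.2)
    hg.hasFDerivAt.hasFDerivWithinAt (mem_univ x) (Ioo_subset_Icc_self ht)

lemma fderiv_uncurry_apply_one (hg : DifferentiableAt ℝ (uncurry g) (x, t)) (ht : t ∈ Ioo 0 T) :
    fderiv ℝ (uncurry g) (x, t) (v, 1) = timeDeriv T g x t + fderiv ℝ (fun z => g z t) x v := by
  have hspace : HasFDerivAt (fun z => g z t)
      ((fderiv ℝ (uncurry g) (x, t)).comp (.inl ℝ E ℝ)) x :=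
    hg.hasFDerivAt.comp (f := fun z => (z, t)) x (hasFDerivAt_prodMk_left x t)
  rw [timeDeriv_eq_fderiv hg ht, hspace.fderiv, ContinuousLinearMap.comp_apply,
    ContinuousLinearMap.inl_apply, ← map_add, Prod.mk_add_mk, zero_add, add_zero]

lemma hasDerivAt_fderiv_uncurry_apply (hD : IsOpen D)
    (hg : ContDiffOn ℝ 2 (uncurry g) (D ×ˢ Icc 0 T)) (hx : x ∈ D) (ht : t ∈ Ioo 0 T)
    (w : E × ℝ) :
    HasDerivAt (fun s => fderiv ℝ (uncurry g) (x, s) w)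
      (fderiv ℝ (uncurry (timeDeriv T g)) (x, t) w) t := by
  have hgAt : ContDiffAt ℝ 2 (uncurry g) (x, t) := hg.contDiffAt (prod_Icc_mem_nhds hD hx ht)
  have hfderiv := ((hgAt.fderiv_right (m := 1) (by norm_num)).differentiableAt
    one_ne_zero).hasFDerivAt
  have hz : uncurry (timeDeriv T g) =ᶠ[𝓝 (x, t)] fun q => fderiv ℝ (uncurry g) q (0, 1) := by
    filter_upwards [prod_mem_nhds (hD.mem_nhds hx) (isOpen_Ioo.mem_nhds ht)] with q hq
    exact timeDeriv_eq_fderiv ((hg.contDiffAt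
      (prod_Icc_mem_nhds hD hq.1 hq.2)).differentiableAt two_ne_zero) hq.2
  have hz_apply : fderiv ℝ (uncurry (timeDeriv T g)) (x, t) w
      = fderiv ℝ (fderiv ℝ (uncurry g)) (x, t) (0, 1) w := by
    rw [← hgAt.isSymmSndFDerivAt (by simp) w (0, 1), hz.fderiv_eq,
      fderiv_clm_apply hfderiv.differentiableAt (differentiableAt_const _)]
    simp
  rw [hz_apply]
  simpa using (hfderiv.comp_hasDerivAt t ((hasDerivAt_const t x).prodMk
    (hasDerivAt_id t))).clm_apply (hasDerivAt_const t w)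

lemma fderivWithin_uncurry_apply_one_of_eq_zero (hT : 0 < T) (hD : IsOpen D)
    (hg : DifferentiableOn ℝ (uncurry g) (D ×ˢ Icc 0 T)) (hg0 : ∀ x ∈ D, g x 0 = 0) (hx : x ∈ D) :
    fderivWithin ℝ (uncurry g) (D ×ˢ Icc 0 T) (x, 0) (v, 1) = timeDeriv T g x 0 := by
  have h0 : (0 : ℝ) ∈ Icc 0 T := ⟨le_rfl, hT.le⟩
  have hderiv := (hg (x, 0) ⟨hx, h0⟩).hasFDerivWithinAt
  have hspace : HasFDerivWithinAt (fun z => g z 0)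
      ((fderivWithin ℝ (uncurry g) (D ×ˢ Icc 0 T) (x, 0)).comp (.inl ℝ E ℝ)) D x :=
    hderiv.comp (f := fun z => (z, (0 : ℝ))) x
      (hasFDerivAt_prodMk_left x 0).hasFDerivWithinAt fun _ hz => ⟨hz, h0⟩
  have hzero : HasFDerivAt (fun z => g z 0) (0 : E →L[ℝ] ℝ) x :=
    (hasFDerivAt_const (0 : ℝ) x).congr_of_eventuallyEq <| by
      filter_upwards [hD.mem_nhds hx] with z hz using hg0 z hz
  have hv := congrArg (· v) ((hspace.hasFDerivAt (hD.mem_nhds hx)).unique hzero)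
  simp only [ContinuousLinearMap.comp_apply, ContinuousLinearMap.inl_apply, zero_apply] at hv
  rw [timeDeriv_eq_of_hasFDerivWithinAt hT hderiv hx h0,
    show ((v, 1) : E × ℝ) = (v, 0) + (0, 1) by simp, map_add, hv, zero_add]

end TimeDeriv

section Source

variable {n : ℕ} {T t : ℝ} {D : Set (Esp n)} {H : Esp n → Esp n} {p f : Esp n → ℝ}
  {R y : Esp n → ℝ → ℝ} {x : Esp n}

/-- `y` is a `C²` solution on `D × (0, T)` of the linearized source problem
`∂ₜ y + ⟨H, ∇y⟩ + p y = R f` with `y(·, 0) = 0`. -/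
structure IsSourceSolution (D : Set (Esp n)) (T : ℝ) (H : Esp n → Esp n) (p : Esp n → ℝ)
    (R : Esp n → ℝ → ℝ) (f : Esp n → ℝ) (y : Esp n → ℝ → ℝ) : Prop where
  contDiffOn : ContDiffOn ℝ 2 (uncurry y) (closure D ×ˢ Icc 0 T)
  equation : ∀ x ∈ D, ∀ t ∈ Ioo 0 T,
    deriv (y x) t + ⟪H x, gradient (fun z => y z t) x⟫ + p x * y x t = R x t * f x
  initial : ∀ x ∈ D, y x 0 = 0

namespace IsSourceSolution

variable (hy : IsSourceSolution D T H p R f y)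
include hy

lemma contDiffOn_domain : ContDiffOn ℝ 2 (uncurry y) (D ×ˢ Icc 0 T) :=
  hy.contDiffOn.mono (prod_mono_left subset_closure)

lemma fderiv_uncurry_eq (hD : IsOpen D) (hx : x ∈ D) (ht : t ∈ Ioo 0 T) :
    fderiv ℝ (uncurry y) (x, t) (H x, 1) = R x t * f x - p x * y x t := by
  have hyAt := (hy.contDiffOn_domain.contDiffAt (prod_Icc_mem_nhds hD hx ht)).differentiableAt
    two_ne_zero
  have heq := hy.equation x hx t ht
  rw [deriv_eq_timeDeriv ht, real_inner_comm, gradient,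
    InnerProductSpace.toDual_symm_apply] at heq
  rw [fderiv_uncurry_apply_one hyAt ht]
  linarith

lemma fderiv_timeDeriv_eq (hD : IsOpen D)
    (hR : DifferentiableOn ℝ (uncurry R) (D ×ˢ Icc 0 T)) (hx : x ∈ D) (ht : t ∈ Ioo 0 T) :
    fderiv ℝ (uncurry (timeDeriv T y)) (x, t) (H x, 1)
      = timeDeriv T R x t * f x - p x * timeDeriv T y x t := by
  have hnhds := Icc_mem_nhds ht.1 ht.2
  have htIcc := Ioo_subset_Icc_self ht
  have hRt := (hasDerivWithinAt_timeDeriv hR hx htIcc).hasDerivAt hnhds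
  have hyt := (hasDerivWithinAt_timeDeriv (hy.contDiffOn_domain.differentiableOn two_ne_zero) hx
    htIcc).hasDerivAt hnhds
  refine (hasDerivAt_fderiv_uncurry_apply hD hy.contDiffOn_domain hx ht (H x, 1)).unique
    (((hRt.mul_const (f x)).sub (hyt.const_mul (p x))).congr_of_eventuallyEq ?_)
  filter_upwards [isOpen_Ioo.mem_nhds ht] with s hs using hy.fderiv_uncurry_eq hD hx hs

lemma timeDeriv_zero_eq (hT : 0 < T) (hD : IsOpen D)
    (hR : ContinuousOn (uncurry R) (D ×ˢ Icc 0 T)) (hx : x ∈ D) :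
    timeDeriv T y x 0 = R x 0 * f x := by
  have hyD := hy.contDiffOn_domain
  have hslice : ContinuousOn (fun s : ℝ => (x, s)) (Icc 0 T) := by fun_prop
  have hmaps : MapsTo (fun s : ℝ => (x, s)) (Icc 0 T) (D ×ˢ Icc 0 T) := fun _ hs => ⟨hx, hs⟩
  have hleft : ContinuousOn
      (fun s => fderivWithin ℝ (uncurry y) (D ×ˢ Icc 0 T) (x, s) (H x, 1)) (Icc 0 T) :=
    ((hyD.continuousOn_fderivWithin (hD.uniqueDiffOn.prod (uniqueDiffOn_Icc hT))
      one_le_two).comp hslice hmaps).clm_apply continuousOn_const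
  have hright : ContinuousOn (fun s => R x s * f x - p x * y x s) (Icc 0 T) :=
    ((hR.comp hslice hmaps).mul continuousOn_const).sub
      (continuousOn_const.mul (hyD.continuousOn.comp hslice hmaps))
  have heq : EqOn (fun s => fderivWithin ℝ (uncurry y) (D ×ˢ Icc 0 T) (x, s) (H x, 1))
      (fun s => R x s * f x - p x * y x s) (Ioo 0 T) := fun s hs => by
    simp only [fderivWithin_of_mem_nhds (prod_Icc_mem_nhds hD hx hs),
      hy.fderiv_uncurry_eq hD hx hs]
  have heq0 := heq.of_subset_closure hleft hright Ioo_subset_Icc_self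
    (closure_Ioo hT.ne).ge ⟨le_rfl, hT.le⟩
  simpa only [hy.initial x hx, mul_zero, sub_zero, fderivWithin_uncurry_apply_one_of_eq_zero hT hD
    (hyD.differentiableOn two_ne_zero) hy.initial hx] using heq0

end IsSourceSolution

end Source

/-! ### Integrals depending on time -/

section TimeIntegral

section Continuous

variable {X : Type*} [TopologicalSpace X] [T2Space X] [MeasurableSpace X] [OpensMeasurableSpace X]
  {μ : Measure X} [IsFiniteMeasure μ] {K : Set X} {J : Set ℝ} {e : X → ℝ → ℝ}

lemma integrable_slice_of_ae_mem (hK : IsCompact K) (hμ : ∀ᵐ x ∂μ, x ∈ K)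
    (he : ContinuousOn (uncurry e) (K ×ˢ J)) {t : ℝ} (ht : t ∈ J) :
    Integrable (fun x => e x t) μ :=
  integrable_of_continuousOn_of_ae_mem hK hμ <|
    he.comp (f := fun x => (x, t)) (by fun_prop) fun _ hx => ⟨hx, ht⟩

lemma continuousOn_integral_of_ae_mem (hK : IsCompact K) (hμ : ∀ᵐ x ∂μ, x ∈ K) (hJ : IsCompact J)
    (he : ContinuousOn (uncurry e) (K ×ˢ J)) : ContinuousOn (fun t => ∫ x, e x t ∂μ) J := by
  obtain ⟨B, hB⟩ := (hK.prod hJ).exists_bound_of_continuousOn he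
  refine continuousOn_of_dominated (bound := fun _ => B) (fun t ht => ?_) (fun t ht => ?_)
    (integrable_const B) ?_
  · exact (integrable_slice_of_ae_mem hK hμ he ht).aestronglyMeasurable
  · filter_upwards [hμ] with x hx using hB (x, t) ⟨hx, ht⟩
  · filter_upwards [hμ] with x hx
    exact he.comp (f := fun t => (x, t)) (by fun_prop) fun t ht => ⟨hx, ht⟩

end Continuous

variable {E : Type*} [NormedAddCommGroup E] [NormedSpace ℝ E] [MeasurableSpace E]
  [OpensMeasurableSpace E] {μ : Measure E} [IsFiniteMeasure μ] {K : Set E} {T t κ : ℝ}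
  {e : E → ℝ → ℝ} {φ : ℝ → ℝ}

lemma hasDerivAt_integral_timeDeriv (hK : IsCompact K) (hμ : ∀ᵐ x ∂μ, x ∈ K)
    (he : ContDiffOn ℝ 1 (uncurry e) (K ×ˢ Icc 0 T)) (ht : t ∈ Ioo 0 T) :
    HasDerivAt (fun s => ∫ x, e x s ∂μ) (∫ x, timeDeriv T e x t ∂μ) t := by
  have hT : 0 < T := ht.1.trans ht.2
  have htIcc := Ioo_subset_Icc_self ht
  have he' := continuousOn_timeDeriv hT he
  obtain ⟨B, hB⟩ := (hK.prod isCompact_Icc).exists_bound_of_continuousOn he'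
  refine (hasDerivAt_integral_of_dominated_loc_of_deriv_le (F := fun s x => e x s)
    (F' := fun s x => timeDeriv T e x s) (s := Ioo 0 T) (bound := fun _ => B)
    (isOpen_Ioo.mem_nhds ht) ?_ (integrable_slice_of_ae_mem hK hμ he.continuousOn htIcc)
    (integrable_slice_of_ae_mem hK hμ he' htIcc).aestronglyMeasurable ?_ (integrable_const B) ?_).2
  · filter_upwards [isOpen_Ioo.mem_nhds ht] with s hs
    exact (integrable_slice_of_ae_mem hK hμ he.continuousOn
      (Ioo_subset_Icc_self hs)).aestronglyMeasurable
  · filter_upwards [hμ] with x hx s hs using hB (x, s) ⟨hx, Ioo_subset_Icc_self hs⟩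
  · filter_upwards [hμ] with x hx s hs
    exact (hasDerivWithinAt_timeDeriv (he.differentiableOn one_ne_zero) hx
      (Ioo_subset_Icc_self hs)).hasDerivAt (Icc_mem_nhds hs.1 hs.2)

lemma mul_integral_sub_le_of_timeDeriv_le (hK : IsCompact K) (hμ : ∀ᵐ x ∂μ, x ∈ K)
    (he : ContDiffOn ℝ 1 (uncurry e) (K ×ˢ Icc 0 T)) (hφ : ContinuousOn φ (Icc 0 T))
    (hle : ∀ s ∈ Ioo 0 T, κ * ∫ x, timeDeriv T e x s ∂μ ≤ φ s) (ht : t ∈ Icc 0 T) :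
    κ * ((∫ x, e x t ∂μ) - ∫ x, e x 0 ∂μ) ≤ ∫ s in (0)..t, φ s := by
  have hsub : Icc 0 t ⊆ Icc 0 T := Icc_subset_Icc_right ht.2
  have hcont : ContinuousOn (fun s => κ * ∫ x, e x s ∂μ) (Icc 0 t) :=
    continuousOn_const.mul
      ((continuousOn_integral_of_ae_mem hK hμ isCompact_Icc he.continuousOn).mono hsub)
  rw [mul_sub]
  refine intervalIntegral.sub_le_integral_of_hasDeriv_right_of_le ht.1 hcont (fun s hs => ?_)
    (hφ.mono hsub).integrableOn_Icc fun s hs => hle s ⟨hs.1, hs.2.trans_le ht.2⟩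
  exact ((hasDerivAt_integral_timeDeriv hK hμ he
    ⟨hs.1, hs.2.trans_le ht.2⟩).const_mul κ).hasDerivWithinAt

end TimeIntegral

/-! ### The weighted energy inequality -/

lemma integral_exp_neg_mul_le {c t : ℝ} (hc : 0 < c) :
    ∫ s in (0)..t, Real.exp (-c * s) ≤ c⁻¹ := by
  rw [intervalIntegral.integral_comp_mul_left _ (neg_ne_zero.2 hc.ne'), integral_exp, mul_zero,
    Real.exp_zero, smul_eq_mul, inv_neg, neg_mul, ← mul_neg, neg_sub]
  exact mul_le_of_le_one_right (inv_nonneg.2 hc.le) (sub_le_self _ (Real.exp_pos _).le)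

lemma isFiniteMeasure_restrict_of_isCompact_closure {X : Type*} [TopologicalSpace X]
    [MeasurableSpace X] {μ : Measure X} [IsFiniteMeasureOnCompacts μ] {D : Set X}
    (hK : IsCompact (closure D)) : IsFiniteMeasure (μ.restrict D) :=
  isFiniteMeasure_restrict.2 ((measure_mono subset_closure).trans_lt hK.measure_lt_top).ne

section Weight

/-- The density `z² e^{-λ t + ψ}` of the weighted energy of `z`. -/
def weightedSq {X : Type*} (lam : ℝ) (ψ : X → ℝ) (z : X → ℝ → ℝ) (x : X) (t : ℝ) : ℝ :=
  z x t ^ 2 * Real.exp (-lam * t + ψ x)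

lemma weightedSq_eq {X : Type*} {lam t : ℝ} {ψ : X → ℝ} {z : X → ℝ → ℝ} {x : X} :
    weightedSq lam ψ z x t = Real.exp (-lam * t) * (z x t ^ 2 * Real.exp (ψ x)) := by
  rw [weightedSq, Real.exp_add, mul_left_comm]

variable {E : Type*} [NormedAddCommGroup E] [NormedSpace ℝ E] {K : Set E} {J : Set ℝ}
  {lam t : ℝ} {ψ : E → ℝ} {z : E → ℝ → ℝ} {x v : E}

lemma contDiffOn_weightedSq (hz : ContDiffOn ℝ 1 (uncurry z) (K ×ˢ J)) (hψ : ContDiffOn ℝ 1 ψ K) :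
    ContDiffOn ℝ 1 (uncurry (weightedSq lam ψ z)) (K ×ˢ J) :=
  (hz.pow 2).mul <| ((contDiffOn_const.mul contDiffOn_snd).add
    (hψ.comp contDiffOn_fst fun _ hq => hq.1)).exp

lemma fderiv_weightedSq (hz : DifferentiableAt ℝ (uncurry z) (x, t)) (hψ : DifferentiableAt ℝ ψ x) :
    fderiv ℝ (uncurry (weightedSq lam ψ z)) (x, t) (v, 1)
      = (2 * z x t * fderiv ℝ (uncurry z) (x, t) (v, 1)
        + z x t ^ 2 * (-lam + fderiv ℝ ψ x v)) * Real.exp (-lam * t + ψ x) := by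
  have hweight : HasFDerivAt (fun q : E × ℝ => Real.exp (-lam * q.2 + ψ q.1))
      (Real.exp (-lam * t + ψ x) • (-lam • ContinuousLinearMap.snd ℝ E ℝ
        + (fderiv ℝ ψ x).comp (.fst ℝ E ℝ))) (x, t) :=
    ((hasFDerivAt_snd.const_mul (-lam)).add
      (hψ.hasFDerivAt.comp (f := Prod.fst) (x, t) hasFDerivAt_fst)).exp
  have hprod : HasFDerivAt (uncurry (weightedSq lam ψ z)) _ (x, t) :=
    (hz.hasFDerivAt.pow 2).mul hweight
  rw [hprod.fderiv]
  simp [uncurry]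
  ring

end Weight

section Transport

variable {n : ℕ} {D : Set (Esp n)} {T M R₁ : ℝ} {H : Esp n → Esp n} {p f : Esp n → ℝ}
  {r z : Esp n → ℝ → ℝ}

/-- `z` is a `C¹` solution on `D × (0, T)` of the transport problem `∂ₜ z + ⟨H, ∇z⟩ + p z = r f`,
where `M` bounds `H`, `DH` and `p`, and `R₁` bounds `r`. The transport derivative is encoded as the
derivative of `uncurry z` in the direction `(H, 1)`. -/
structure IsTransport (D : Set (Esp n)) (T M R₁ : ℝ) (H : Esp n → Esp n) (p f : Esp n → ℝ)
    (r z : Esp n → ℝ → ℝ) : Prop where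
  contDiffOn_field : ContDiffOn ℝ 1 H D
  norm_field_le : ∀ x ∈ D, ‖H x‖ ≤ M
  norm_fderiv_field_le : ∀ x ∈ D, ‖fderiv ℝ H x‖ ≤ M
  abs_potential_le : ∀ x ∈ D, |p x| ≤ M
  abs_source_le : ∀ x ∈ D, ∀ t ∈ Icc 0 T, |r x t| ≤ R₁
  continuousOn_amplitude : ContinuousOn f (closure D)
  contDiffOn : ContDiffOn ℝ 1 (uncurry z) (closure D ×ˢ Icc 0 T)
  equation : ∀ x ∈ D, ∀ t ∈ Ioo 0 T,
    fderiv ℝ (uncurry z) (x, t) (H x, 1) = r x t * f x - p x * z x t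

namespace IsTransport

variable {C κ lam t A : ℝ} {σ : Measure (Esp n)} {ψ : Esp n → ℝ} {x : Esp n}
  (hZ : IsTransport D T M R₁ H p f r z)
include hZ

lemma continuousOn_slice (ht : t ∈ Icc 0 T) : ContinuousOn (fun x => z x t) (closure D) :=
  hZ.contDiffOn.continuousOn.comp (f := fun x => (x, t)) (by fun_prop) fun _ hx => ⟨hx, ht⟩

lemma contDiffOn_weightedSq_slice (hψ : ContDiffOn ℝ 1 ψ (closure D)) (ht : t ∈ Icc 0 T) :
    ContDiffOn ℝ 1 (fun x => weightedSq lam ψ z x t) (closure D) :=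
  (contDiffOn_weightedSq hZ.contDiffOn hψ).comp (f := fun x => (x, t)) (by fun_prop)
    fun _ hx => ⟨hx, ht⟩

/- Multiplying the equation by `2 z` leaves the terms `-2 p z²`, `2 z r f` and `z² div H`; the
weight produces `z² (-λ + ∂_H ψ)`, which absorbs the part of them that is quadratic in `z`. -/
lemma production_le (hD : IsOpen D) (hψ : DifferentiableAt ℝ ψ x) (hκ : |κ| = 1) (hx : x ∈ D)
    (ht : t ∈ Ioo 0 T) (hlam : κ * (-lam + fderiv ℝ ψ x (H x)) + ((n + 2) * M + R₁) ≤ 0) :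
    κ * (fderiv ℝ (uncurry (weightedSq lam ψ z)) (x, t) (H x, 1)
        + weightedSq lam ψ z x t * divergence H x)
      ≤ R₁ * (f x ^ 2 * Real.exp (ψ x)) * Real.exp (-lam * t) := by
  have hzd := ((hZ.contDiffOn.mono (prod_mono_left subset_closure)).contDiffAt
    (prod_Icc_mem_nhds hD hx ht)).differentiableAt one_ne_zero
  have hr := hZ.abs_source_le x hx t (Ioo_subset_Icc_self ht)
  rw [fderiv_weightedSq hzd hψ, hZ.equation x hx t ht, weightedSq]
  have hκ_le : ∀ a : ℝ, κ * a ≤ |a| := fun a =>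
    (le_abs_self _).trans_eq (by rw [abs_mul, hκ, one_mul])
  have hdiv : κ * divergence H x ≤ n * M :=
    (hκ_le _).trans (abs_divergence_le (hZ.norm_fderiv_field_le x hx))
  have hpotential : κ * -p x ≤ M :=
    (hκ_le _).trans_eq (abs_neg _) |>.trans (hZ.abs_potential_le x hx)
  have hsource : κ * (2 * z x t * (r x t * f x)) ≤ R₁ * (z x t ^ 2 + f x ^ 2) := by
    calc κ * (2 * z x t * (r x t * f x)) ≤ |2 * z x t * (r x t * f x)| := hκ_le _
      _ = |r x t| * |2 * z x t * f x| := by rw [← abs_mul]; ring_nf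
      _ ≤ R₁ * (z x t ^ 2 + f x ^ 2) := by
          refine mul_le_mul hr ?_ (abs_nonneg _) ((abs_nonneg _).trans hr)
          exact abs_le.2 ⟨by nlinarith [sq_nonneg (z x t + f x)], two_mul_le_add_sq _ _⟩
  have habsorb : z x t ^ 2 * (κ * (-lam + fderiv ℝ ψ x (H x)) + κ * divergence H x
      + 2 * (κ * -p x) + R₁) ≤ 0 :=
    mul_nonpos_of_nonneg_of_nonpos (sq_nonneg _) (by linarith)
  have hbracket : κ * (2 * z x t * (r x t * f x - p x * z x t)
      + z x t ^ 2 * (-lam + fderiv ℝ ψ x (H x)) + z x t ^ 2 * divergence H x) ≤ R₁ * f x ^ 2 := by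
    linarith
  calc _ = κ * (2 * z x t * (r x t * f x - p x * z x t) + z x t ^ 2 * (-lam + fderiv ℝ ψ x (H x))
        + z x t ^ 2 * divergence H x) * Real.exp (-lam * t + ψ x) := by ring
    _ ≤ R₁ * f x ^ 2 * Real.exp (-lam * t + ψ x) :=
        mul_le_mul_of_nonneg_right hbracket (Real.exp_pos _).le
    _ = R₁ * (f x ^ 2 * Real.exp (ψ x)) * Real.exp (-lam * t) := by rw [Real.exp_add]; ring

variable (hσ : IsFluxMeasure D σ C) (hM : 0 ≤ M)

include hσ hM in
lemma abs_setIntegral_flux_weightedSq_le (hψ : ContDiffOn ℝ 1 ψ (closure D)) (hlam : 0 ≤ lam)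
    (hK : IsCompact (closure D)) (hA : ∀ x ∈ closure D, Real.exp (ψ x) ≤ A) (ht : t ∈ Icc 0 T) :
    |∫ x in D, (fderiv ℝ (fun x => weightedSq lam ψ z x t) x (H x)
        + weightedSq lam ψ z x t * divergence H x)| ≤ C * M * A * ∫ x, z x t ^ 2 ∂σ := by
  have := hσ.isFiniteMeasure
  have he := hZ.contDiffOn_weightedSq_slice hψ (lam := lam) ht
  have hboundary : ∫ x, |weightedSq lam ψ z x t| ∂σ ≤ A * ∫ x, z x t ^ 2 ∂σ := by
    rw [← integral_const_mul]
    refine integral_mono_ae (integrable_of_continuousOn_of_ae_mem hK hσ.ae_mem_closure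
      he.continuousOn.abs) ((integrable_of_continuousOn_of_ae_mem hK hσ.ae_mem_closure
      ((hZ.continuousOn_slice ht).pow 2)).const_mul A) ?_
    filter_upwards [hσ.ae_mem_closure] with x hx
    rw [weightedSq, abs_of_nonneg (by positivity), mul_comm]
    refine mul_le_mul_of_nonneg_right ((Real.exp_le_exp.2 ?_).trans (hA x hx)) (sq_nonneg _)
    linarith [mul_nonneg hlam ht.1]
  calc _ ≤ C * M * ∫ x, |weightedSq lam ψ z x t| ∂σ := hσ.abs_setIntegral_le he
        hZ.contDiffOn_field hZ.norm_field_le hZ.norm_fderiv_field_le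
    _ ≤ C * M * (A * ∫ x, z x t ^ 2 ∂σ) :=
        mul_le_mul_of_nonneg_left hboundary (mul_nonneg hσ.nonneg hM)
    _ = C * M * A * ∫ x, z x t ^ 2 ∂σ := (mul_assoc _ _ _).symm

variable (hD : IsOpen D) (hK : IsCompact (closure D))
include hσ hM hD hK

lemma mul_setIntegral_timeDeriv_le (hψ : ContDiffOn ℝ 1 ψ (closure D)) (hκ : |κ| = 1)
    (hlam : 0 ≤ lam)
    (habsorb : ∀ x ∈ D, κ * (-lam + fderiv ℝ ψ x (H x)) + ((n + 2) * M + R₁) ≤ 0)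
    (hA : ∀ x ∈ closure D, Real.exp (ψ x) ≤ A) (ht : t ∈ Ioo 0 T) :
    κ * ∫ x in D, timeDeriv T (weightedSq lam ψ z) x t
      ≤ R₁ * (∫ x in D, f x ^ 2 * Real.exp (ψ x)) * Real.exp (-lam * t)
        + C * M * A * ∫ x, z x t ^ 2 ∂σ := by
  have htIcc := Ioo_subset_Icc_self ht
  set e := weightedSq lam ψ z
  have he : ContDiffOn ℝ 1 (uncurry e) (closure D ×ˢ Icc 0 T) :=
    contDiffOn_weightedSq hZ.contDiffOn hψ
  have htime : IntegrableOn (fun x => timeDeriv T e x t) D := by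
    refine (ContinuousOn.integrableOn_compact hK ?_).mono_set subset_closure
    exact (continuousOn_timeDeriv (ht.1.trans ht.2) he).comp (f := fun x => (x, t)) (by fun_prop)
      fun x hx => ⟨hx, htIcc⟩
  have hspace := integrableOn_fderiv_apply_add_mul_divergence hD hK
    (hZ.contDiffOn_weightedSq_slice hψ (lam := lam) htIcc) hZ.contDiffOn_field hZ.norm_field_le
    hZ.norm_fderiv_field_le
  have hsource : IntegrableOn (fun x => f x ^ 2 * Real.exp (ψ x)) D :=
    (((hZ.continuousOn_amplitude.pow 2).mul hψ.continuousOn.rexp).integrableOn_compact hK).mono_set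
      subset_closure
  have hproduction : κ * ((∫ x in D, timeDeriv T e x t)
      + ∫ x in D, (fderiv ℝ (fun x => e x t) x (H x) + e x t * divergence H x))
      ≤ R₁ * (∫ x in D, f x ^ 2 * Real.exp (ψ x)) * Real.exp (-lam * t) := by
    rw [← integral_add htime hspace, ← integral_const_mul, ← integral_const_mul,
      ← integral_mul_const]
    refine setIntegral_mono_on ((htime.add hspace).const_mul κ)
      ((hsource.const_mul R₁).mul_const _) hD.measurableSet fun x hx => ?_
    have hex := ((he.mono (prod_mono_left subset_closure)).contDiffAt
      (prod_Icc_mem_nhds hD hx ht)).differentiableAt one_ne_zero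
    have hψx := ((hψ.mono subset_closure).contDiffAt (hD.mem_nhds hx)).differentiableAt one_ne_zero
    rw [← add_assoc, ← fderiv_uncurry_apply_one hex ht]
    exact hZ.production_le hD hψx hκ hx ht (habsorb x hx)
  have hflux := hZ.abs_setIntegral_flux_weightedSq_le hσ hM hψ hlam hK hA htIcc
  have hκflux := neg_le_abs (κ * ∫ x in D, (fderiv ℝ (fun x => e x t) x (H x)
    + e x t * divergence H x))
  rw [abs_mul, hκ, one_mul] at hκflux
  linarith

lemma weighted_energy_le (hR₁ : 0 ≤ R₁) (hψ : ContDiffOn ℝ 1 ψ (closure D)) (hκ : |κ| = 1)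
    (hlam : 0 < lam)
    (habsorb : ∀ x ∈ D, κ * (-lam + fderiv ℝ ψ x (H x)) + ((n + 2) * M + R₁) ≤ 0)
    (hA0 : 0 ≤ A) (hA : ∀ x ∈ closure D, Real.exp (ψ x) ≤ A) (ht : t ∈ Icc 0 T) :
    κ * (Real.exp (-lam * t) * (∫ x in D, z x t ^ 2 * Real.exp (ψ x))
        - ∫ x in D, z x 0 ^ 2 * Real.exp (ψ x))
      ≤ R₁ / lam * (∫ x in D, f x ^ 2 * Real.exp (ψ x))
        + C * M * A * ∫ s in (0)..T, ∫ x, z x s ^ 2 ∂σ := by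
  have := hσ.isFiniteMeasure
  have : IsFiniteMeasure (volume.restrict D) :=
    isFiniteMeasure_restrict_of_isCompact_closure hK
  have hmem : ∀ᵐ x ∂volume.restrict D, x ∈ closure D :=
    (ae_restrict_mem hD.measurableSet).mono fun _ hx => subset_closure hx
  set F := ∫ x in D, f x ^ 2 * Real.exp (ψ x)
  have hF : 0 ≤ F := integral_nonneg fun x => by positivity
  have hboundary : ContinuousOn (fun s => ∫ x, z x s ^ 2 ∂σ) (Icc 0 T) :=
    continuousOn_integral_of_ae_mem hK hσ.ae_mem_closure isCompact_Icc
      (hZ.contDiffOn.continuousOn.pow 2)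
  have hboundary_int : IntervalIntegrable (fun s => ∫ x, z x s ^ 2 ∂σ) volume 0 t :=
    (hboundary.mono (Icc_subset_Icc_right ht.2)).intervalIntegrable_of_Icc ht.1
  have hrhs : ContinuousOn (fun s => R₁ * F * Real.exp (-lam * s)
      + C * M * A * ∫ x, z x s ^ 2 ∂σ) (Icc 0 T) :=
    Continuous.continuousOn (by fun_prop) |>.add (continuousOn_const.mul hboundary)
  have henergy := mul_integral_sub_le_of_timeDeriv_le hK hmem
    (contDiffOn_weightedSq (lam := lam) hZ.contDiffOn hψ) hrhs
    (fun s hs => hZ.mul_setIntegral_timeDeriv_le hσ hM hD hK hψ hκ hlam.le habsorb hA hs) ht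
  have hmono : ∫ s in (0)..t, ∫ x, z x s ^ 2 ∂σ ≤ ∫ s in (0)..T, ∫ x, z x s ^ 2 ∂σ :=
    intervalIntegral.integral_mono_interval le_rfl ht.1 ht.2
      (ae_of_all _ fun s => integral_nonneg fun x => sq_nonneg _)
      (hboundary.intervalIntegrable_of_Icc (ht.1.trans ht.2))
  simp only [weightedSq_eq, integral_const_mul, mul_zero, Real.exp_zero, one_mul] at henergy
  rw [intervalIntegral.integral_add (Continuous.intervalIntegrable (by fun_prop) _ _)
    (hboundary_int.const_mul _), intervalIntegral.integral_const_mul,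
    intervalIntegral.integral_const_mul] at henergy
  refine henergy.trans (add_le_add ?_ ?_)
  · calc R₁ * F * ∫ s in (0)..t, Real.exp (-lam * s) ≤ R₁ * F * lam⁻¹ :=
          mul_le_mul_of_nonneg_left (integral_exp_neg_mul_le hlam) (mul_nonneg hR₁ hF)
      _ = R₁ / lam * F := by ring
  · exact mul_le_mul_of_nonneg_left hmono (mul_nonneg (mul_nonneg hσ.nonneg hM) hA0)

end IsTransport

end Transport

/-! ### Stability estimates -/

section WeightedIntegral

variable {X : Type*} [TopologicalSpace X] [T2Space X] [MeasurableSpace X] [OpensMeasurableSpace X]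
  {μ : Measure X} [IsFiniteMeasureOnCompacts μ] {D : Set X} {g h : X → ℝ} {P : ℝ}

lemma setIntegral_mono_of_isCompact_closure (hK : IsCompact (closure D)) (hD : MeasurableSet D)
    (hg : ContinuousOn g (closure D)) (hh : ContinuousOn h (closure D))
    (hle : ∀ x ∈ D, g x ≤ h x) : ∫ x in D, g x ∂μ ≤ ∫ x in D, h x ∂μ :=
  setIntegral_mono_on ((hg.integrableOn_compact hK).mono_set subset_closure)
    ((hh.integrableOn_compact hK).mono_set subset_closure) hD hle

variable {ψ : X → ℝ}

lemma setIntegral_sq_mul_exp_le (hK : IsCompact (closure D)) (hD : MeasurableSet D)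
    (hg : ContinuousOn g (closure D)) (hψ : ContinuousOn ψ (closure D)) (hP : ∀ x ∈ D, |ψ x| ≤ P) :
    ∫ x in D, g x ^ 2 * Real.exp (ψ x) ∂μ ≤ Real.exp P * ∫ x in D, g x ^ 2 ∂μ := by
  rw [← integral_const_mul]
  refine setIntegral_mono_of_isCompact_closure hK hD ((hg.pow 2).mul hψ.rexp)
    (continuousOn_const.mul (hg.pow 2)) fun x hx => ?_
  rw [mul_comm]
  exact mul_le_mul_of_nonneg_right (Real.exp_le_exp.2 (abs_le.1 (hP x hx)).2) (sq_nonneg _)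

lemma setIntegral_sq_le_exp_mul (hK : IsCompact (closure D)) (hD : MeasurableSet D)
    (hg : ContinuousOn g (closure D)) (hψ : ContinuousOn ψ (closure D)) (hP : ∀ x ∈ D, |ψ x| ≤ P) :
    ∫ x in D, g x ^ 2 ∂μ ≤ Real.exp P * ∫ x in D, g x ^ 2 * Real.exp (ψ x) ∂μ := by
  rw [← integral_const_mul]
  refine setIntegral_mono_of_isCompact_closure hK hD (hg.pow 2)
    (continuousOn_const.mul ((hg.pow 2).mul hψ.rexp)) fun x hx => ?_
  rw [mul_left_comm, ← Real.exp_add]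
  exact le_mul_of_one_le_right (sq_nonneg _)
    (Real.one_le_exp (by linarith [(abs_le.1 (hP x hx)).1]))

end WeightedIntegral

/-- The constant of the forward energy estimate `IsTransport.setIntegral_sq_le`. -/
def forwardConst (n : ℕ) (T M R₁ Q C : ℝ) : ℝ :=
  Real.exp (((n + 2) * M + R₁ + 1) * T) * (Q + 1 + C * M)

section Stability

variable {n : ℕ} {D : Set (Esp n)} {T M R₁ Q C : ℝ} {H : Esp n → Esp n} {p f : Esp n → ℝ}
  {r z : Esp n → ℝ → ℝ} {σ : Measure (Esp n)}

lemma forwardConst_pos (hM : 0 ≤ M) (hQ : 0 ≤ Q) (hC : 0 ≤ C) : 0 < forwardConst n T M R₁ Q C := by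
  unfold forwardConst
  positivity

namespace IsTransport

variable (hZ : IsTransport D T M R₁ H p f r z) (hσ : IsFluxMeasure D σ C) (hM : 0 ≤ M)
  (hR₁ : 0 ≤ R₁) (hD : IsOpen D) (hK : IsCompact (closure D))
include hZ hσ hM hR₁ hD hK

variable {q lam P : ℝ} {φ : Esp n → ℝ}

lemma mul_setIntegral_amplitude_sq_le (hT : 0 ≤ T) (hq : 0 ≤ q) (hlam : 0 < lam)
    (hzq : ∀ x ∈ D, q * f x ^ 2 ≤ z x 0 ^ 2) (hφ : ContDiffOn ℝ 1 φ (closure D))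
    (hφP : ∀ x ∈ closure D, |φ x| ≤ P)
    (hφH : ∀ x ∈ D, (n + 2) * M + R₁ + lam ≤ fderiv ℝ φ x (H x)) (hsource : R₁ / lam ≤ q / 2) :
    q / 2 * ∫ x in D, f x ^ 2 ≤ Real.exp P ^ 2 * (Real.exp (-lam * T) * (∫ x in D, z x T ^ 2)
      + C * M * ∫ s in (0)..T, ∫ x, z x s ^ 2 ∂σ) := by
  have h0T : (0 : ℝ) ∈ Icc 0 T := ⟨le_rfl, hT⟩
  have hTT : T ∈ Icc 0 T := ⟨hT, le_rfl⟩
  have hφP_domain := fun x hx => hφP x (subset_closure hx)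
  have hf := hZ.continuousOn_amplitude
  have henergy := hZ.weighted_energy_le hσ hM hD hK hR₁ (κ := -1) hφ (by simp) hlam
    (fun x hx => by linarith [hφH x hx]) (Real.exp_pos P).le
    (fun x hx => Real.exp_le_exp.2 (le_of_abs_le (hφP x hx))) hTT
  have hinitial : q * ∫ x in D, f x ^ 2 * Real.exp (φ x)
      ≤ ∫ x in D, z x 0 ^ 2 * Real.exp (φ x) := by
    rw [← integral_const_mul]
    refine setIntegral_mono_of_isCompact_closure hK hD.measurableSet
      (continuousOn_const.mul ((hf.pow 2).mul hφ.continuousOn.rexp))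
      (((hZ.continuousOn_slice h0T).pow 2).mul hφ.continuousOn.rexp) fun x hx => ?_
    rw [← mul_assoc]
    exact mul_le_mul_of_nonneg_right (hzq x hx) (Real.exp_pos _).le
  have hamplitude := setIntegral_sq_le_exp_mul (μ := volume) hK hD.measurableSet hf
    hφ.continuousOn hφP_domain
  have hfinal := mul_le_mul_of_nonneg_left (setIntegral_sq_mul_exp_le (μ := volume) hK
    hD.measurableSet (hZ.continuousOn_slice hTT) hφ.continuousOn hφP_domain)
    (Real.exp_pos (-lam * T)).le
  have hW : 0 ≤ ∫ x in D, f x ^ 2 * Real.exp (φ x) := integral_nonneg fun x => by positivity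
  have habsorbed := mul_le_mul_of_nonneg_right hsource hW
  calc q / 2 * ∫ x in D, f x ^ 2
      ≤ q / 2 * (Real.exp P * ∫ x in D, f x ^ 2 * Real.exp (φ x)) := by gcongr
    _ = Real.exp P * (q / 2 * ∫ x in D, f x ^ 2 * Real.exp (φ x)) := by ring
    _ ≤ Real.exp P * (Real.exp (-lam * T) * (Real.exp P * ∫ x in D, z x T ^ 2)
          + C * M * Real.exp P * ∫ s in (0)..T, ∫ x, z x s ^ 2 ∂σ) := by gcongr; linarith
    _ = _ := by ring

variable (hQ : 0 ≤ Q)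
include hQ

lemma setIntegral_sq_le (hzQ : ∀ x ∈ D, z x 0 ^ 2 ≤ Q * f x ^ 2) {t : ℝ} (ht : t ∈ Icc 0 T) :
    ∫ x in D, z x t ^ 2 ≤ forwardConst n T M R₁ Q C *
      ((∫ x in D, f x ^ 2) + ∫ s in (0)..T, ∫ x, z x s ^ 2 ∂σ) := by
  have hT : 0 ≤ T := ht.1.trans ht.2
  have hC := hσ.nonneg
  set lam : ℝ := (n + 2) * M + R₁ + 1 with hlam_def
  have hlam : 0 < lam := by positivity
  have henergy := hZ.weighted_energy_le hσ hM hD hK hR₁ (κ := 1) (lam := lam) (A := 1)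
    (ψ := fun _ => 0) contDiffOn_const abs_one hlam (fun x _ => by simp [hlam_def]; linarith)
    zero_le_one (fun _ _ => Real.exp_zero.le) ht
  simp only [Real.exp_zero, mul_one, one_mul] at henergy
  have hinitial : ∫ x in D, z x 0 ^ 2 ≤ Q * ∫ x in D, f x ^ 2 := by
    rw [← integral_const_mul]
    exact setIntegral_mono_of_isCompact_closure hK hD.measurableSet
      ((hZ.continuousOn_slice ⟨le_rfl, hT⟩).pow 2)
      (continuousOn_const.mul (hZ.continuousOn_amplitude.pow 2)) hzQ
  have hF : 0 ≤ ∫ x in D, f x ^ 2 := integral_nonneg fun _ => sq_nonneg _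
  have hB : 0 ≤ ∫ s in (0)..T, ∫ x, z x s ^ 2 ∂σ :=
    intervalIntegral.integral_nonneg hT fun _ _ => integral_nonneg fun _ => sq_nonneg _
  set F := ∫ x in D, f x ^ 2
  set B := ∫ s in (0)..T, ∫ x, z x s ^ 2 ∂σ
  have hsource : R₁ / lam * F ≤ F :=
    mul_le_of_le_one_left hF ((div_le_one hlam).2 (by rw [hlam_def]; nlinarith))
  have hdecay : Real.exp (-lam * t) * ∫ x in D, z x t ^ 2 ≤ (Q + 1 + C * M) * (F + B) := by
    have hmixed : 0 ≤ C * M * F + (Q + 1) * B := by positivity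
    linarith
  calc ∫ x in D, z x t ^ 2 = Real.exp (lam * t) * (Real.exp (-lam * t) * ∫ x in D, z x t ^ 2) := by
        rw [← mul_assoc, ← Real.exp_add, neg_mul, add_neg_cancel, Real.exp_zero, one_mul]
    _ ≤ Real.exp (lam * T) * ((Q + 1 + C * M) * (F + B)) :=
        mul_le_mul (Real.exp_le_exp.2 (mul_le_mul_of_nonneg_left ht.2 hlam.le)) hdecay
          (by positivity) (Real.exp_pos _).le
    _ = forwardConst n T M R₁ Q C * (F + B) := (mul_assoc _ _ _).symm

variable {τ β : ℝ} {ψ : Esp n → ℝ}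

lemma setIntegral_amplitude_sq_le_of_large (hT : 0 ≤ T) (hq : 0 < q) (hτ : 0 < τ) (hβ : 0 < β)
    (hzQ : ∀ x ∈ D, z x 0 ^ 2 ≤ Q * f x ^ 2) (hzq : ∀ x ∈ D, q * f x ^ 2 ≤ z x 0 ^ 2)
    (hψ : ContDiffOn ℝ 1 ψ (closure D)) (hψP : ∀ x ∈ closure D, |ψ x| ≤ P)
    (hψH : ∀ x ∈ D, 2 * β ≤ fderiv ℝ ψ x (H x))
    (habsorb : (n + 2) * M + R₁ ≤ τ * β) (hsource : R₁ / (τ * β) ≤ q / 4)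
    (hfinal : Real.exp (-(τ * (β * T - 2 * P))) * forwardConst n T M R₁ Q C ≤ q / 4) :
    ∫ x in D, f x ^ 2 ≤ (1 + 4 * (Real.exp (τ * P) ^ 2 * (C * M)) / q)
      * ∫ s in (0)..T, ∫ x, z x s ^ 2 ∂σ := by
  have hbackward := hZ.mul_setIntegral_amplitude_sq_le hσ hM hR₁ hD hK (P := τ * P)
    (φ := fun x => τ * ψ x) hT hq.le (mul_pos hτ hβ) hzq (contDiffOn_const.mul hψ)
    (fun x hx => by
      rw [abs_mul, abs_of_pos hτ]
      exact mul_le_mul_of_nonneg_left (hψP x hx) hτ.le)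
    (fun x hx => by
      rw [fderiv_const_mul (((hψ.mono subset_closure).contDiffAt
        (hD.mem_nhds hx)).differentiableAt one_ne_zero), smul_apply, smul_eq_mul]
      linarith [mul_le_mul_of_nonneg_left (hψH x hx) hτ.le]) (hsource.trans (by linarith))
  have hforward := hZ.setIntegral_sq_le hσ hM hR₁ hD hK hQ hzQ (t := T) ⟨hT, le_rfl⟩
  have hF : 0 ≤ ∫ x in D, f x ^ 2 := integral_nonneg fun _ => sq_nonneg _
  have hB : 0 ≤ ∫ s in (0)..T, ∫ x, z x s ^ 2 ∂σ :=
    intervalIntegral.integral_nonneg hT fun _ _ => integral_nonneg fun _ => sq_nonneg _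
  set F := ∫ x in D, f x ^ 2
  set B := ∫ s in (0)..T, ∫ x, z x s ^ 2 ∂σ
  have hexp : Real.exp (τ * P) ^ 2 * Real.exp (-(τ * β) * T)
      = Real.exp (-(τ * (β * T - 2 * P))) := by
    rw [← Real.exp_nat_mul, ← Real.exp_add]
    push_cast
    ring_nf
  have hlast : Real.exp (τ * P) ^ 2 * (Real.exp (-(τ * β) * T) * ∫ x in D, z x T ^ 2)
      ≤ q / 4 * (F + B) := by
    rw [← mul_assoc, hexp]
    calc _ ≤ Real.exp (-(τ * (β * T - 2 * P))) * (forwardConst n T M R₁ Q C * (F + B)) := by gcongr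
      _ ≤ q / 4 * (F + B) := by rw [← mul_assoc]; gcongr
  have hquarter : q / 4 * F ≤ q / 4 * B + Real.exp (τ * P) ^ 2 * (C * M) * B := by linarith
  calc F = q / 4 * F * (4 / q) := by field_simp
    _ ≤ (q / 4 * B + Real.exp (τ * P) ^ 2 * (C * M) * B) * (4 / q) := by gcongr
    _ = (1 + 4 * (Real.exp (τ * P) ^ 2 * (C * M)) / q) * B := by field_simp

end IsTransport

lemma exists_large_parameter {a b L β γ ε : ℝ} (hβ : 0 < β) (hγ : 0 < γ) (hε : 0 < ε) :
    ∃ τ : ℝ, 0 < τ ∧ a ≤ τ * β ∧ b / (τ * β) ≤ ε ∧ Real.exp (-(τ * γ)) * L ≤ ε := by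
  have hlin : ∀ {c : ℝ}, 0 < c → Tendsto (fun τ : ℝ => τ * c) atTop atTop :=
    fun hc => tendsto_id.atTop_mul_const hc
  have hdecay : Tendsto (fun τ : ℝ => Real.exp (-(τ * γ)) * L) atTop (𝓝 0) := by
    simpa using (Real.tendsto_exp_neg_atTop_nhds_zero.comp (hlin hγ)).mul_const L
  exact ((eventually_gt_atTop 0).and (((hlin hβ).eventually_ge_atTop a).and
    ((((hlin hβ).const_div_atTop b).eventually_le_const hε).and
      (hdecay.eventually_le_const hε)))).exists

lemma exists_setIntegral_amplitude_sq_le {q P β : ℝ} (hσ : IsFluxMeasure D σ C) (hM : 0 ≤ M)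
    (hR₁ : 0 ≤ R₁) (hQ : 0 ≤ Q) (hD : IsOpen D) (hK : IsCompact (closure D)) (hT : 0 ≤ T)
    (hq : 0 < q) (hβ : 0 < β) (hP : 2 * P < β * T) :
    ∃ C' > 0, ∀ (H : Esp n → Esp n) (p f ψ : Esp n → ℝ) (r z : Esp n → ℝ → ℝ),
      IsTransport D T M R₁ H p f r z →
      (∀ x ∈ D, z x 0 ^ 2 ≤ Q * f x ^ 2) → (∀ x ∈ D, q * f x ^ 2 ≤ z x 0 ^ 2) →
      ContDiffOn ℝ 1 ψ (closure D) → (∀ x ∈ closure D, |ψ x| ≤ P) →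
      (∀ x ∈ D, 2 * β ≤ fderiv ℝ ψ x (H x)) →
      ∫ x in D, f x ^ 2 ≤ C' * ∫ s in (0)..T, ∫ x, z x s ^ 2 ∂σ := by
  obtain ⟨τ, hτ, habsorb, hsource, hfinal⟩ := exists_large_parameter (a := (n + 2) * M + R₁)
    (b := R₁) (L := forwardConst n T M R₁ Q C) hβ (sub_pos.2 hP) (div_pos hq four_pos)
  have hC := hσ.nonneg
  exact ⟨1 + 4 * (Real.exp (τ * P) ^ 2 * (C * M)) / q, by positivity,
    fun H p f ψ r z hZ hzQ hzq hψ hψP hψH => hZ.setIntegral_amplitude_sq_le_of_large hσ hM hR₁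
      hD hK hQ hT hq hτ hβ hzQ hzq hψ hψP hψH habsorb hsource hfinal⟩

end Stability

section Displacement

variable {E : Type*} [NormedAddCommGroup E] [NormedSpace ℝ E] {K : Set E} {T t : ℝ}
  {y : E → ℝ → ℝ}

lemma timeDeriv_weightedSq_le {x : E} (hy : DifferentiableOn ℝ (uncurry y) (K ×ˢ Icc 0 T))
    (hx : x ∈ K) (ht : t ∈ Ioo 0 T) :
    timeDeriv T (weightedSq 1 (fun _ => 0) y) x t ≤ timeDeriv T y x t ^ 2 := by
  have hyt := hasDerivWithinAt_timeDeriv hy hx (Ioo_subset_Icc_self ht)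
  have hexp : HasDerivAt (fun s : ℝ => Real.exp (-1 * s + 0))
      (Real.exp (-1 * t + 0) * (-1 * 1)) t :=
    (((hasDerivAt_id t).const_mul (-1)).add_const 0).exp
  have he := (hyt.fun_pow 2).mul hexp.hasDerivWithinAt
  have hderiv : timeDeriv T (weightedSq 1 (fun _ => 0) y) x t
      = (2 * y x t * timeDeriv T y x t - y x t ^ 2) * Real.exp (-1 * t + 0) := by
    refine (he.derivWithin (uniqueDiffOn_Icc (ht.1.trans ht.2) t (Ioo_subset_Icc_self ht))).trans ?_
    ring
  rw [hderiv]
  refine (mul_le_mul_of_nonneg_right ?_ (Real.exp_pos _).le).trans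
    (mul_le_of_le_one_right (sq_nonneg _) (Real.exp_le_one_iff.2 (by linarith [ht.1])))
  linarith [two_mul_le_add_sq (y x t) (timeDeriv T y x t)]

variable [MeasurableSpace E] [OpensMeasurableSpace E] {μ : Measure E} [IsFiniteMeasure μ] {S : ℝ}

lemma integral_sq_le_of_integral_timeDeriv_sq_le (hT : 0 < T) (hK : IsCompact K)
    (hμ : ∀ᵐ x ∂μ, x ∈ K) (hy : ContDiffOn ℝ 1 (uncurry y) (K ×ˢ Icc 0 T))
    (hy0 : ∀ᵐ x ∂μ, y x 0 = 0)
    (hS : ∀ s ∈ Icc 0 T, ∫ x, timeDeriv T y x s ^ 2 ∂μ ≤ S) (ht : t ∈ Icc 0 T) :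
    ∫ x, y x t ^ 2 ∂μ ≤ Real.exp T * (T * S) := by
  have he : ContDiffOn ℝ 1 (uncurry (weightedSq 1 (fun _ => 0) y)) (K ×ˢ Icc 0 T) :=
    contDiffOn_weightedSq hy contDiffOn_const
  have hS0 : 0 ≤ S := (integral_nonneg fun _ => sq_nonneg _).trans (hS 0 ⟨le_rfl, hT.le⟩)
  have hrate : ∀ s ∈ Ioo 0 T, 1 * ∫ x, timeDeriv T (weightedSq 1 (fun _ => 0) y) x s ∂μ ≤ S := by
    intro s hs
    have hsIcc := Ioo_subset_Icc_self hs
    rw [one_mul]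
    refine (integral_mono_ae (integrable_slice_of_ae_mem hK hμ (continuousOn_timeDeriv hT he) hsIcc)
      (integrable_slice_of_ae_mem (e := fun x s => timeDeriv T y x s ^ 2) hK hμ
        ((continuousOn_timeDeriv hT hy).fun_pow 2) hsIcc) ?_).trans (hS s hsIcc)
    filter_upwards [hμ] with x hx
      using timeDeriv_weightedSq_le (hy.differentiableOn one_ne_zero) hx hs
  have hinitial : ∫ x, y x 0 ^ 2 ∂μ = 0 := integral_eq_zero_of_ae <| by
    filter_upwards [hy0] with x hx
    simp [hx]
  have henergy := mul_integral_sub_le_of_timeDeriv_le hK hμ he continuousOn_const hrate ht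
  simp only [weightedSq_eq, Real.exp_zero, mul_one, one_mul, integral_const_mul, hinitial, mul_zero,
    sub_zero, intervalIntegral.integral_const, smul_eq_mul] at henergy
  calc ∫ x, y x t ^ 2 ∂μ = Real.exp t * (Real.exp (-1 * t) * ∫ x, y x t ^ 2 ∂μ) := by
        rw [← mul_assoc, ← Real.exp_add, neg_one_mul, add_neg_cancel, Real.exp_zero, one_mul]
    _ ≤ Real.exp t * (t * S) := mul_le_mul_of_nonneg_left henergy (Real.exp_pos _).le
    _ ≤ Real.exp T * (T * S) := by
        gcongr
        exacts [mul_nonneg ht.1 hS0, ht.2, ht.2]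

end Displacement

/-! ### The weight function of an admissible field -/

section RadialWeight

variable {n : ℕ} {a x : Esp n} {H : Esp n → Esp n} {M P : ℝ} {s : Set (Esp n)}

/-- The weight `ψ_H` centred at the base point `a` instead of the origin, so that only the diameter
of the domain, and not its position, enters the estimates. -/
def radialWeight (a : Esp n) (H : Esp n → Esp n) (x : Esp n) : ℝ := ⟪x - a, H x⟫

lemma abs_radialWeight_le (hH : ‖H x‖ ≤ M) (hx : dist x a ≤ P) : |radialWeight a H x| ≤ P * M := by
  rw [dist_eq_norm] at hx
  exact (abs_real_inner_le_norm _ _).trans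
    (mul_le_mul hx hH (norm_nonneg _) ((norm_nonneg _).trans hx))

lemma contDiffOn_radialWeight (hH : ContDiffOn ℝ 1 H s) : ContDiffOn ℝ 1 (radialWeight a H) s :=
  (contDiffOn_id.sub contDiffOn_const).inner ℝ hH

lemma le_fderiv_radialWeight (hd : DifferentiableAt ℝ H x) (hH : ‖H x‖ ≤ M)
    (hH' : ‖fderiv ℝ H x‖ ≤ M) (hx : dist x a ≤ P) :
    ‖H x‖ ^ 2 - P * M ^ 2 ≤ fderiv ℝ (radialWeight a H) x (H x) := by
  rw [dist_eq_norm] at hx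
  have hderiv : fderiv ℝ (radialWeight a H) x (H x)
      = ⟪x - a, fderiv ℝ H x (H x)⟫ + ⟪H x, H x⟫ :=
    (fderiv_inner_apply ℝ (differentiableAt_id.sub_const a) hd (H x)).trans
      (by simp [fderiv_sub_const])
  have hcross : |⟪x - a, fderiv ℝ H x (H x)⟫| ≤ P * M ^ 2 :=
    calc |⟪x - a, fderiv ℝ H x (H x)⟫| ≤ ‖x - a‖ * ‖fderiv ℝ H x (H x)‖ :=
          abs_real_inner_le_norm _ _
      _ ≤ P * (M * M) :=
          mul_le_mul hx ((fderiv ℝ H x).le_of_opNorm_le_of_le hH' hH) (norm_nonneg _)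
            ((norm_nonneg _).trans hx)
      _ = P * M ^ 2 := by rw [sq]
  rw [hderiv, real_inner_self_eq_norm_sq]
  linarith [(abs_le.1 hcross).1]

end RadialWeight

/-! ### Lipschitz stability of the source -/

lemma exists_sq_bounds_of_ne_zero {X : Type*} [TopologicalSpace X] {K : Set X} {g : X → ℝ}
    (hK : IsCompact K) (hg : ContinuousOn g K) (hg0 : ∀ x ∈ K, g x ≠ 0) :
    ∃ q > 0, ∃ Q ≥ 0, ∀ x ∈ K, q ≤ g x ^ 2 ∧ g x ^ 2 ≤ Q := by
  obtain ⟨q, hq, hqg⟩ := hK.exists_forall_le' (hg.pow 2) fun x hx => sq_pos_of_ne_zero (hg0 x hx)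
  obtain ⟨B, hB⟩ := hK.exists_bound_of_continuousOn hg
  exact ⟨q, hq, B ^ 2, sq_nonneg B, fun x hx => ⟨hqg x hx, sq_le_sq' (abs_le.1 (hB x hx)).1
    (abs_le.1 (hB x hx)).2⟩⟩

section SourceStability

variable {n : ℕ} {D : Set (Esp n)} {T M δ₀ R₁ C : ℝ} {H : Esp n → Esp n} {p f : Esp n → ℝ}
  {R y : Esp n → ℝ → ℝ} {σ : Measure (Esp n)}

lemma IsSourceSolution.isTransport_timeDeriv (hy : IsSourceSolution D T H p R f y) (hT : 0 < T)
    (hD : IsOpen D) (hH : IsAdmissible M δ₀ (closure D) H) (hp : ∀ x ∈ D, |p x| ≤ M)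
    (hR : DifferentiableOn ℝ (uncurry R) (closure D ×ˢ Icc 0 T))
    (hR₁ : ∀ x ∈ D, ∀ t ∈ Icc 0 T, |timeDeriv T R x t| ≤ R₁) (hf : ContinuousOn f (closure D)) :
    IsTransport D T M R₁ H p f (timeDeriv T R) (timeDeriv T y) := by
  obtain ⟨U, -, -, hKU, hHU, hHM, hHM', -⟩ := hH
  have hDU : D ⊆ U := subset_closure.trans hKU
  exact
    { contDiffOn_field := hHU.mono hDU
      norm_field_le := fun x hx => hHM x (hDU hx)
      norm_fderiv_field_le := fun x hx => hHM' x (hDU hx)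
      abs_potential_le := hp
      abs_source_le := hR₁
      continuousOn_amplitude := hf
      contDiffOn := contDiffOn_timeDeriv (m := 1) hT (hy.contDiffOn.of_le (by norm_num))
      equation := fun x hx t ht =>
        hy.fderiv_timeDeriv_eq hD (hR.mono (prod_mono_left subset_closure)) hx ht }

lemma IsSourceSolution.sq_bounds_timeDeriv_zero {q Q : ℝ} (hy : IsSourceSolution D T H p R f y)
    (hT : 0 < T) (hD : IsOpen D) (hR : ContinuousOn (uncurry R) (D ×ˢ Icc 0 T))
    (hqQ : ∀ x ∈ D, q ≤ R x 0 ^ 2 ∧ R x 0 ^ 2 ≤ Q) :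
    (∀ x ∈ D, q * f x ^ 2 ≤ timeDeriv T y x 0 ^ 2) ∧
      ∀ x ∈ D, timeDeriv T y x 0 ^ 2 ≤ Q * f x ^ 2 := by
  have hz0 : ∀ x ∈ D, timeDeriv T y x 0 ^ 2 = R x 0 ^ 2 * f x ^ 2 := fun x hx => by
    rw [hy.timeDeriv_zero_eq hT hD hR hx, mul_pow]
  exact ⟨fun x hx => (hz0 x hx).ge.trans' (mul_le_mul_of_nonneg_right (hqQ x hx).1 (sq_nonneg _)),
    fun x hx => (hz0 x hx).trans_le (mul_le_mul_of_nonneg_right (hqQ x hx).2 (sq_nonneg _))⟩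

lemma exists_weight_of_isAdmissible (hK : IsCompact (closure D)) (hne : D.Nonempty) (hδ₀ : 0 ≤ δ₀)
    (hH : IsAdmissible M δ₀ (closure D) H) :
    ∃ ψ : Esp n → ℝ, ContDiffOn ℝ 1 ψ (closure D) ∧ (∀ x ∈ closure D, |ψ x| ≤ diam D * M) ∧
      ∀ x ∈ D, δ₀ ^ 2 - M ^ 2 * diam D ≤ fderiv ℝ ψ x (H x) := by
  obtain ⟨U, hU, -, hKU, hHU, hHM, hHM', hHδ⟩ := hH
  obtain ⟨a, ha⟩ := hne
  have hdist : ∀ x ∈ closure D, dist x a ≤ diam D := fun x hx => by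
    simpa only [diam_closure] using dist_le_diam_of_mem hK.isBounded hx (subset_closure ha)
  refine ⟨radialWeight a H, contDiffOn_radialWeight (hHU.mono hKU),
    fun x hx => abs_radialWeight_le (hHM x (hKU hx)) (hdist x hx), fun x hx => ?_⟩
  have hxK := subset_closure hx
  have hderiv := le_fderiv_radialWeight
    ((hHU.contDiffAt (hU.mem_nhds (hKU hxK))).differentiableAt one_ne_zero) (hHM x (hKU hxK))
    (hHM' x (hKU hxK)) (hdist x hxK)
  linarith [pow_le_pow_left₀ hδ₀ (hHδ x hxK).le 2]

variable (hσ : IsFluxMeasure D σ C) (hD : IsOpen D) (hK : IsCompact (closure D))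
  (hne : D.Nonempty) (hT : 0 < T) (hM : 0 ≤ M) (hδ₀ : 0 ≤ δ₀)
  (hdiam : 4 * M * diam D < (δ₀ ^ 2 - M ^ 2 * diam D) * T)
  (hR : ContDiffOn ℝ 1 (uncurry R) (closure D ×ˢ Icc 0 T)) (hR0 : ∀ x ∈ closure D, R x 0 ≠ 0)
include hσ hD hK hne hT hM hδ₀ hdiam hR hR0

lemma exists_source_and_timeDeriv_stability :
    ∃ L > 0, ∀ (H : Esp n → Esp n) (p f : Esp n → ℝ) (y : Esp n → ℝ → ℝ),
      IsAdmissible M δ₀ (closure D) H → (∀ x ∈ D, |p x| ≤ M) → ContinuousOn f (closure D) →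
      IsSourceSolution D T H p R f y →
      ∫ x in D, f x ^ 2 ≤ L * (∫ s in (0)..T, ∫ x, timeDeriv T y x s ^ 2 ∂σ) ∧
      ∀ t ∈ Icc 0 T, ∫ x in D, timeDeriv T y x t ^ 2
        ≤ L * ∫ s in (0)..T, ∫ x, timeDeriv T y x s ^ 2 ∂σ := by
  have h0T : (0 : ℝ) ∈ Icc 0 T := ⟨le_rfl, hT.le⟩
  have hβ : 0 < (δ₀ ^ 2 - M ^ 2 * diam D) / 2 :=
    half_pos (pos_of_mul_pos_left ((by positivity : 0 ≤ 4 * M * diam D).trans_lt hdiam) hT.le)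
  obtain ⟨q, hq, Q, hQ, hqQ⟩ := exists_sq_bounds_of_ne_zero hK
    (hR.continuousOn.comp (f := fun x => (x, 0)) (by fun_prop) fun _ hx => ⟨hx, h0T⟩) hR0
  obtain ⟨R₁, hR₁⟩ := (hK.prod isCompact_Icc).exists_bound_of_continuousOn
    (continuousOn_timeDeriv hT hR)
  have hR₁_nonneg : 0 ≤ R₁ :=
    (norm_nonneg _).trans (hR₁ (hne.some, 0) ⟨subset_closure hne.some_mem, h0T⟩)
  obtain ⟨Ca, hCa, hamplitude⟩ := exists_setIntegral_amplitude_sq_le hσ hM hR₁_nonneg hQ hD hK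
    hT.le hq hβ (P := diam D * M) (by linarith)
  have hCf := forwardConst_pos (n := n) (T := T) (R₁ := R₁) hM hQ hσ.nonneg
  refine ⟨Ca + forwardConst n T M R₁ Q C * (Ca + 1), by positivity,
    fun H p f y hH hp hf hy => ?_⟩
  obtain ⟨ψ, hψ, hψP, hψH⟩ := exists_weight_of_isAdmissible hK hne hδ₀ hH
  have hZ := hy.isTransport_timeDeriv hT hD hH hp (hR.differentiableOn one_ne_zero)
    (fun x hx t ht => hR₁ (x, t) ⟨subset_closure hx, ht⟩) hf
  obtain ⟨hzq, hzQ⟩ := hy.sq_bounds_timeDeriv_zero hT hD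
    (hR.continuousOn.mono (prod_mono_left subset_closure)) fun x hx => hqQ x (subset_closure hx)
  have hF := hamplitude H p f ψ _ _ hZ hzQ hzq hψ hψP fun x hx => by linarith [hψH x hx]
  have hB : 0 ≤ ∫ s in (0)..T, ∫ x, timeDeriv T y x s ^ 2 ∂σ :=
    intervalIntegral.integral_nonneg hT.le fun _ _ => integral_nonneg fun _ => sq_nonneg _
  refine ⟨hF.trans ?_, fun t ht => ?_⟩
  · gcongr
    exact le_add_of_nonneg_right (by positivity)
  · refine (hZ.setIntegral_sq_le hσ hM hR₁_nonneg hD hK hQ hzQ ht).trans ?_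
    refine (mul_le_mul_of_nonneg_left (add_le_add_left hF _) hCf.le).trans ?_
    linarith [mul_nonneg hCa.le hB]

theorem exists_source_and_solution_stability :
    ∃ L > 0, ∀ (H : Esp n → Esp n) (p f : Esp n → ℝ) (y : Esp n → ℝ → ℝ),
      IsAdmissible M δ₀ (closure D) H → (∀ x ∈ D, |p x| ≤ M) → ContinuousOn f (closure D) →
      IsSourceSolution D T H p R f y →
      ∫ x in D, f x ^ 2 ≤ L * (∫ s in (0)..T, ∫ x, timeDeriv T y x s ^ 2 ∂σ) ∧
      ∀ t ∈ Icc 0 T,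
        ∫ x in D, y x t ^ 2 ≤ L * (∫ s in (0)..T, ∫ x, timeDeriv T y x s ^ 2 ∂σ) ∧
        ∫ x in D, timeDeriv T y x t ^ 2 ≤ L * ∫ s in (0)..T, ∫ x, timeDeriv T y x s ^ 2 ∂σ := by
  obtain ⟨L, hL, hstab⟩ :=
    exists_source_and_timeDeriv_stability hσ hD hK hne hT hM hδ₀ hdiam hR hR0
  refine ⟨L * (1 + Real.exp T * T), by positivity, fun H p f y hH hp hf hy => ?_⟩
  obtain ⟨hF, hE⟩ := hstab H p f y hH hp hf hy
  have hB : 0 ≤ ∫ s in (0)..T, ∫ x, timeDeriv T y x s ^ 2 ∂σ :=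
    intervalIntegral.integral_nonneg hT.le fun _ _ => integral_nonneg fun _ => sq_nonneg _
  set B := ∫ s in (0)..T, ∫ x, timeDeriv T y x s ^ 2 ∂σ
  have hLB : L * B ≤ L * (1 + Real.exp T * T) * B := by
    gcongr
    exact le_mul_of_one_le_right hL.le (le_add_of_nonneg_right (by positivity))
  refine ⟨hF.trans hLB, fun t ht => ⟨?_, (hE t ht).trans hLB⟩⟩
  have : IsFiniteMeasure (volume.restrict D) := isFiniteMeasure_restrict_of_isCompact_closure hK
  refine (integral_sq_le_of_integral_timeDeriv_sq_le hT hK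
    ((ae_restrict_mem hD.measurableSet).mono fun _ hx => subset_closure hx)
    (hy.contDiffOn.of_le one_le_two)
    ((ae_restrict_iff' hD.measurableSet).2 (ae_of_all _ hy.initial)) hE ht).trans ?_
  linarith [mul_nonneg hL.le hB]

end SourceStability

section FullBoundary

variable {d : ℕ} {T ρ : ℝ} {ℓ ℓt : Esp d → ℝ} {y : Esp (d + 1) → ℝ → ℝ}

lemma IsGraphPair.intervalIntegral_integral_timeDeriv_sq (hG : IsGraphPair d ρ ℓ ℓt) (hT : 0 < T)
    (hy : ContDiffOn ℝ 1 (uncurry y) (closure (graphDomain d ρ ℓ ℓt) ×ˢ Icc 0 T)) :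
    ∫ s in (0)..T, ∫ x, timeDeriv T y x s ^ 2 ∂graphBoundaryMeasure d ρ ℓ ℓt
      = ∫ t in Ioo 0 T, ∫ x' in ball (0 : Esp d) ρ,
        ((deriv (y (graphMk d x' (ℓ x'))) t) ^ 2 * omegaW d ℓ x'
          + (deriv (y (graphMk d x' (ℓ x' - ℓt x'))) t) ^ 2
            * omegaW d (fun z => ℓ z - ℓt z) x') := by
  have := hG.isFiniteMeasure_graphBoundaryMeasure
  rw [intervalIntegral.integral_of_le hT.le, integral_Ioc_eq_integral_Ioo]
  refine setIntegral_congr_fun measurableSet_Ioo fun t ht => ?_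
  simp only [deriv_eq_timeDeriv ht]
  exact hG.integral_graphBoundaryMeasure (integrable_slice_of_ae_mem
    (e := fun x s => timeDeriv T y x s ^ 2) hG.isCompact_closure
    hG.ae_graphBoundaryMeasure_mem_closure ((continuousOn_timeDeriv hT hy).fun_pow 2)
    (Ioo_subset_Icc_self ht))

lemma setIntegral_deriv_sq_le_timeDeriv_sq {n : ℕ} {D : Set (Esp n)} {y : Esp n → ℝ → ℝ} {t : ℝ}
    (hK : IsCompact (closure D)) (hT : 0 < T)
    (hy : ContDiffOn ℝ 1 (uncurry y) (closure D ×ˢ Icc 0 T)) (ht : t ∈ Icc 0 T) :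
    ∫ x in D, deriv (y x) t ^ 2 ≤ ∫ x in D, timeDeriv T y x t ^ 2 := by
  refine integral_mono_of_nonneg (ae_of_all _ fun x => sq_nonneg _) ?_
    (ae_of_all _ fun x => deriv_sq_le_timeDeriv_sq hT ht)
  refine (ContinuousOn.integrableOn_compact hK ?_).mono_set subset_closure
  exact ((continuousOn_timeDeriv hT hy).comp (f := fun x => (x, t)) (by fun_prop)
    fun _ hx => ⟨hx, ht⟩).pow 2

end FullBoundary

lemma sqrt_add_iSup_sqrt_add_sqrt_le {ι : Type*} [Nonempty ι] {a b L : ℝ} {u v : ι → ℝ}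
    (hL : 0 ≤ L) (ha : a ≤ L * b) (hu : ∀ i, u i ≤ L * b) (hv : ∀ i, v i ≤ L * b) :
    √a + ⨆ i, (√(u i) + √(v i)) ≤ 3 * √L * √b := by
  have hsup : ⨆ i, (√(u i) + √(v i)) ≤ √(L * b) + √(L * b) :=
    ciSup_le fun i => add_le_add (Real.sqrt_le_sqrt (hu i)) (Real.sqrt_le_sqrt (hv i))
  rw [mul_assoc, ← Real.sqrt_mul hL]
  linarith [Real.sqrt_le_sqrt ha]

theorem proposition4_lipschitz_stability_full_boundary_general
    (d : ℕ) (T M δ₀ ρ₁ : ℝ) (hT : 0 < T) (hM : 0 ≤ M) (hδ₀ : 0 ≤ δ₀) (hρ₁ : 0 < ρ₁)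
    (ℓ ℓt : Esp d → ℝ)
    (hℓ : ContDiffOn ℝ 1 ℓ (closedBall 0 ρ₁)) (hℓt : ContDiffOn ℝ 1 ℓt (closedBall 0 ρ₁))
    (hℓtpos : ∀ x' : Esp d, ‖x'‖ < ρ₁ → 0 < ℓt x') (hℓt0 : ∀ x' : Esp d, ‖x'‖ = ρ₁ → ℓt x' = 0)
    (R : Esp (d + 1) → ℝ → ℝ)
    (hR : ContDiffOn ℝ 1 (uncurry R) (closure (graphDomain d ρ₁ ℓ ℓt) ×ˢ Icc 0 T))
    (hR0 : ∀ x ∈ closure (graphDomain d ρ₁ ℓ ℓt), R x 0 ≠ 0)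
    (hdiam : 4 * M * diam (graphDomain d ρ₁ ℓ ℓt)
      < (δ₀ ^ 2 - M ^ 2 * diam (graphDomain d ρ₁ ℓ ℓt)) * T) :
    ∃ C > (0 : ℝ), ∀ (H : Esp (d + 1) → Esp (d + 1)) (p₁ f : Esp (d + 1) → ℝ)
      (y : Esp (d + 1) → ℝ → ℝ),
      IsAdmissible M δ₀ (closure (graphDomain d ρ₁ ℓ ℓt)) H →
      (∀ x ∈ graphDomain d ρ₁ ℓ ℓt, |p₁ x| ≤ M) →
      ContinuousOn f (closure (graphDomain d ρ₁ ℓ ℓt)) →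
      IsSourceSolution (graphDomain d ρ₁ ℓ ℓt) T H p₁ R f y →
      √(∫ x in graphDomain d ρ₁ ℓ ℓt, f x ^ 2)
        + (⨆ t : Icc (0 : ℝ) T, (√(∫ x in graphDomain d ρ₁ ℓ ℓt, y x t ^ 2)
          + √(∫ x in graphDomain d ρ₁ ℓ ℓt, deriv (y x) t ^ 2)))
      ≤ C * √(∫ t in Ioo 0 T, ∫ x' in ball (0 : Esp d) ρ₁,
          (deriv (y (graphMk d x' (ℓ x'))) t ^ 2 * omegaW d ℓ x'
            + deriv (y (graphMk d x' (ℓ x' - ℓt x'))) t ^ 2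
              * omegaW d (fun z => ℓ z - ℓt z) x')) := by
  have hG : IsGraphPair d ρ₁ ℓ ℓt := ⟨hρ₁, hℓ, hℓt, hℓtpos, hℓt0⟩
  have hK := hG.isCompact_closure
  have : Nonempty (Icc (0 : ℝ) T) := ⟨⟨0, le_rfl, hT.le⟩⟩
  obtain ⟨C', hC'⟩ := exists_abs_deriv_smoothTransition_le
  obtain ⟨L, hL, hstab⟩ := exists_source_and_solution_stability (hG.isFluxMeasure hC')
    hG.isOpen_graphDomain hK hG.nonempty_graphDomain hT hM hδ₀ hdiam hR hR0
  refine ⟨3 * √L, by positivity, fun H p₁ f y hH hp₁ hf hy => ?_⟩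
  have hy1 := hy.contDiffOn.of_le one_le_two
  obtain ⟨hF, hE⟩ := hstab H p₁ f y hH hp₁ hf hy
  rw [hG.intervalIntegral_integral_timeDeriv_sq hT hy1] at hF
  simp only [hG.intervalIntegral_integral_timeDeriv_sq hT hy1] at hE
  exact sqrt_add_iSup_sqrt_add_sqrt_le hL.le hF (fun t => (hE t t.2).1) fun t =>
    (setIntegral_deriv_sq_le_timeDeriv_sq hK hT hy1 t.2).trans (hE t t.2).2

/-- **Proposition 4** (unconditional Lipschitz stability with full lateral
boundary data). -/
theorem proposition4_lipschitz_stability_full_boundary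
    (d : ℕ) (hd : 1 ≤ d) (T M δ₀ ρ₁ : ℝ)
    (hT : 0 < T) (hM : 0 < M) (hδ₀ : 0 < δ₀) (hρ₁ : 0 < ρ₁)
    (ℓ ℓt : Esp d → ℝ)
    (hℓ : ContDiffOn ℝ 2 ℓ (closedBall 0 ρ₁))
    (hℓt : ContDiffOn ℝ 2 ℓt (closedBall 0 ρ₁))
    (hℓtpos : ∀ x' : Esp d, ‖x'‖ < ρ₁ → 0 < ℓt x')
    (hℓt0 : ∀ x' : Esp d, ‖x'‖ = ρ₁ → ℓt x' = 0)
    (R : Esp (d+1) → ℝ → ℝ)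
    (hR : ContDiffOn ℝ 2 (fun q : Esp (d+1) × ℝ => R q.1 q.2)
      (closure (graphDomain d ρ₁ ℓ ℓt) ×ˢ Icc 0 T))
    (H : Esp (d+1) → Esp (d+1))
    (hH : IsAdmissible M δ₀ (closure (graphDomain d ρ₁ ℓ ℓt)) H)
    (p₁ : Esp (d+1) → ℝ) (hp₁ : ContinuousOn p₁ (closure (graphDomain d ρ₁ ℓ ℓt)))
    (hp₁b : ∀ x ∈ closure (graphDomain d ρ₁ ℓ ℓt), |p₁ x| ≤ M)
    (h0D : (0 : Esp (d+1)) ∈ closure (graphDomain d ρ₁ ℓ ℓt))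
    (hdiam : Metric.diam (graphDomain d ρ₁ ℓ ℓt)
      < min 1 (min (δ₀ ^ 2 / (2 * M ^ 2)) (δ₀ ^ 2 * T / (16 * M))))
    (hR0 : ∀ x ∈ closure (graphDomain d ρ₁ ℓ ℓt), R x 0 ≠ 0)
    (hHν₂ : ∀ x' : Esp d, ‖x'‖ < ρ₁ →
      ⟪H (graphMk d x' (ℓ x' - ℓt x')), nuDown d (fun z => ℓ z - ℓt z) x'⟫ ≤ 0)
 :
    ∃ C > (0:ℝ),
      ∀ (f : Esp (d+1) → ℝ) (y : Esp (d+1) → ℝ → ℝ),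
        ContinuousOn f (closure (graphDomain d ρ₁ ℓ ℓt)) →
        ContDiffOn ℝ 2 (fun q : Esp (d+1) × ℝ => y q.1 q.2)
          (closure (graphDomain d ρ₁ ℓ ℓt) ×ˢ Icc 0 T) →
        (∀ x ∈ graphDomain d ρ₁ ℓ ℓt, ∀ t ∈ Ioo (0:ℝ) T,
          deriv (y x) t + ⟪H x, gradient (fun z => y z t) x⟫ + p₁ x * y x t
            = R x t * f x) →
        (∀ x ∈ graphDomain d ρ₁ ℓ ℓt, y x 0 = 0) →
        Real.sqrt (∫ x in graphDomain d ρ₁ ℓ ℓt, (f x) ^ 2)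
          + (⨆ t : Icc (0:ℝ) T,
              (Real.sqrt (∫ x in graphDomain d ρ₁ ℓ ℓt, (y x (t : ℝ)) ^ 2)
                + Real.sqrt (∫ x in graphDomain d ρ₁ ℓ ℓt, (deriv (y x) (t : ℝ)) ^ 2)))
        ≤ C * Real.sqrt (∫ t in Ioo 0 T, ∫ x' in ball (0 : Esp d) ρ₁,
            ((deriv (y (graphMk d x' (ℓ x'))) t) ^ 2 * omegaW d ℓ x'
              + (deriv (y (graphMk d x' (ℓ x' - ℓt x'))) t) ^ 2
                * omegaW d (fun z => ℓ z - ℓt z) x')) := by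
  have hdiam' : 4 * M * diam (graphDomain d ρ₁ ℓ ℓt)
      < (δ₀ ^ 2 - M ^ 2 * diam (graphDomain d ρ₁ ℓ ℓt)) * T := by
    obtain ⟨-, hfield, htime⟩ := by simpa only [lt_min_iff] using hdiam
    rw [lt_div_iff₀ (by positivity)] at hfield htime
    nlinarith
  obtain ⟨C, hC, hstab⟩ := proposition4_lipschitz_stability_full_boundary_general d T M δ₀ ρ₁ hT
    hM.le hδ₀.le hρ₁ ℓ ℓt (hℓ.of_le one_le_two) (hℓt.of_le one_le_two) hℓtpos hℓt0 R
    (hR.of_le one_le_two) hR0 hdiam'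
  exact ⟨C, hC, fun f y hf hy heq hy0 =>
    hstab H p₁ f y hH (fun x hx => hp₁b x (subset_closure hx)) hf ⟨hy, heq, hy0⟩⟩
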